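/- arXiv:math/0603112 — 2 statements merged into one kernel-verified Lean document; each statement's English description precedes it below -/
import Mathlib

section
/- For every ε > 0 there exists C_ε > 0 such that for every n₁, n₂ ≥ 1, ‖e_{n₁} e_{n₂}‖_{L²(Θ)} ≤ C_ε (min(n₁, n₂))^ε. -/
/-!
The function `u(x) = √x J₀(x)` solves `u'' + q u = 0` with `q(x) = 1 + 1 / (4 x²)` decreasing.
Sonin's monotone quantities, `u'² + q u²` (decreasing) and `u² + u'² / q` (increasing), give
`(1 + x) J₀(x)² ≤ 3` and, at the positive zeros of `J₀`, `1 / 8 ≤ x J₁(x)²`; Sturm comparison with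
`sin`, using `q ≥ 1`, shows that consecutive zeros are at most `π` apart, so `zₙ = O(n)`.
Since `‖J₀(zₙ ·)‖² = π J₁(zₙ)²`, it follows that `eₙ(r)² ≤ 8 zₙ / (1 + zₙ r)`. Bounding the factor
of larger index by `eₘ(r)² r ≤ 8` leaves `64 ∫₀¹ zₙ / (1 + zₙ r) dr = 64 log (1 + zₙ)`, which grows
only logarithmically in the smaller index.
-/

/-- The Bessel function of order zero, defined by its power series. -/
noncomputable def J0 (x : ℝ) : ℝ :=
  ∑' j : ℕ, ((-1 : ℝ) ^ j / ((Nat.factorial j : ℝ)) ^ 2) * (x / 2) ^ (2 * j)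

/-- The `L²(Θ)` norm of `J₀(z_n ·)`. -/
noncomputable def besselL2 (z : ℕ → ℝ) (n : ℕ) : ℝ :=
  Real.sqrt (2 * Real.pi * ∫ r in (0 : ℝ)..1, (J0 (z n * r)) ^ 2 * r)

/-- The normalized Dirichlet eigenfunction `e_n(r) = J₀(z_n r)/‖J₀(z_n ·)‖_{L²(Θ)}`. -/
noncomputable def efun (z : ℕ → ℝ) (n : ℕ) (r : ℝ) : ℝ :=
  J0 (z n * r) / besselL2 z n

open Set

theorem hasDerivAt_tsum_mul_pow {𝕜 : Type*} [RCLike 𝕜] {a : ℕ → 𝕜}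
    (ha : ∀ r : ℝ, Summable fun j ↦ ‖a j‖ * r ^ j) (y : 𝕜) :
    HasDerivAt (fun y ↦ ∑' j, a j * y ^ j) (∑' j : ℕ, ((j : 𝕜) + 1) * a (j + 1) * y ^ j) y := by
  set R : ℝ := ‖y‖ + 1 with hR
  have hy : y ∈ Metric.ball (0 : 𝕜) R := by simp [hR]
  have hbound : ∀ j : ℕ, ∀ x ∈ Metric.ball (0 : 𝕜) R,
      ‖a j * (j * x ^ (j - 1))‖ ≤ ‖a j‖ * (R + 1) ^ j := by
    intro j x hx
    have hxR : ‖x‖ ≤ R := (mem_ball_zero_iff.mp hx).le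
    have hBernoulli : (j : ℝ) * R ^ (j - 1) ≤ (R + 1) ^ j := by
      have := pow_add_mul_le_add_pow (a := R) (b := 1) (by positivity) (by positivity) j
      have : 0 ≤ R ^ j := by positivity
      linarith
    rw [norm_mul, norm_mul, norm_pow, RCLike.norm_natCast]
    gcongr
    exact hBernoulli.trans' (by gcongr)
  have hderiv := hasDerivAt_tsum_of_isPreconnected (ha (R + 1)) Metric.isOpen_ball
    (convex_ball (0 : 𝕜) R).isPreconnected
    (fun j x _ ↦ (hasDerivAt_pow j x).const_mul (a j)) hbound
    (Metric.mem_ball_self (by positivity))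
    (summable_of_ne_finset_zero (s := {0}) fun j hj ↦ by simp_all) hy
  refine hderiv.congr_deriv ?_
  rw [(Summable.of_norm_bounded (ha (R + 1)) fun j ↦ hbound j y hy).tsum_eq_zero_add]
  simp only [Nat.cast_zero, zero_mul, mul_zero, zero_add, Nat.add_sub_cancel, Nat.cast_succ]
  exact tsum_congr fun j ↦ by ring

/-! ### Bessel functions of orders zero and one -/

/-- The Bessel–Clifford function `∑ (-1)ʲ yʲ / (j! (j + n)!)`, in the sign convention for which
`Jₙ(x) = (x / 2)ⁿ * besselClifford n (x² / 4)`. -/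
noncomputable def besselClifford (n : ℕ) (y : ℝ) : ℝ :=
  ∑' j : ℕ, (-1) ^ j / (j.factorial * (j + n).factorial) * y ^ j

/-- The Bessel function of order one, `J₁ = -J₀'`. -/
noncomputable def J1 (x : ℝ) : ℝ := x / 2 * besselClifford 1 (x ^ 2 / 4)

theorem summable_besselClifford (n : ℕ) (r : ℝ) :
    Summable fun j : ℕ ↦ ‖(-1 : ℝ) ^ j / (j.factorial * (j + n).factorial)‖ * r ^ j := by
  refine .of_norm_bounded (Real.summable_pow_div_factorial |r|) fun j ↦ ?_
  have hfac : (1 : ℝ) ≤ (j + n).factorial := mod_cast (j + n).factorial_pos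
  rw [norm_mul, norm_norm, norm_div, norm_pow, norm_neg, norm_one, one_pow, norm_pow,
    Real.norm_eq_abs r, Real.norm_of_nonneg (by positivity), div_mul_eq_mul_div, one_mul]
  gcongr
  exact le_mul_of_one_le_right (by positivity) hfac

theorem hasDerivAt_besselClifford (n : ℕ) (y : ℝ) :
    HasDerivAt (besselClifford n) (-besselClifford (n + 1) y) y := by
  refine (hasDerivAt_tsum_mul_pow (summable_besselClifford n) y).congr_deriv ?_
  rw [besselClifford, ← tsum_neg]
  refine tsum_congr fun j ↦ ?_
  rw [show j + 1 + n = j + (n + 1) by ring, Nat.factorial_succ j]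
  push_cast
  field_simp
  ring

theorem mul_besselClifford_add_two (n : ℕ) (y : ℝ) :
    y * besselClifford (n + 2) y = (n + 1) * besselClifford (n + 1) y - besselClifford n y := by
  have hsum (m : ℕ) : Summable fun j : ℕ ↦
      (-1 : ℝ) ^ j / (j.factorial * (j + m).factorial) * y ^ j :=
    .of_norm <| by simpa only [norm_mul, norm_pow] using summable_besselClifford m ‖y‖
  simp only [besselClifford]
  rw [← tsum_mul_left, ← tsum_mul_left,
    ← ((hsum (n + 1)).mul_left (n + 1 : ℝ)).tsum_sub (hsum n),
    (((hsum (n + 1)).mul_left (n + 1 : ℝ)).sub (hsum n)).tsum_eq_zero_add]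
  have hzero : ((n + 1 : ℝ) * ((-1) ^ 0 / ((0).factorial * (0 + (n + 1)).factorial) * y ^ 0) -
      (-1) ^ 0 / ((0).factorial * (0 + n).factorial) * y ^ 0) = 0 := by
    simp only [zero_add, Nat.factorial_succ n]
    push_cast
    field_simp
    ring
  rw [hzero, zero_add]
  refine tsum_congr fun j ↦ ?_
  rw [show j + (n + 2) = j + n + 1 + 1 by ring, show j + 1 + (n + 1) = j + n + 1 + 1 by ring,
    show j + 1 + n = j + n + 1 by ring, Nat.factorial_succ j, Nat.factorial_succ (j + n + 1)]
  push_cast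
  field_simp
  ring

theorem J0_eq_besselClifford (x : ℝ) : J0 x = besselClifford 0 (x ^ 2 / 4) := by
  refine tsum_congr fun j ↦ ?_
  rw [add_zero, pow_mul, ← sq]
  ring

theorem J0_zero : J0 0 = 1 := by
  rw [J0, tsum_eq_single 0 fun j hj ↦ by simp [hj]]
  simp

theorem J1_zero : J1 0 = 0 := by simp [J1]

theorem hasDerivAt_besselClifford_sq_div_four (n : ℕ) (x : ℝ) :
    HasDerivAt (fun x ↦ besselClifford n (x ^ 2 / 4))
      (-(x / 2 * besselClifford (n + 1) (x ^ 2 / 4))) x := by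
  have hinner : HasDerivAt (fun x : ℝ ↦ x ^ 2 / 4) (x / 2) x :=
    ((hasDerivAt_pow 2 x).div_const 4).congr_deriv (by norm_num; ring)
  refine ((hasDerivAt_besselClifford n (x ^ 2 / 4)).comp x hinner).congr_deriv ?_
  ring

theorem hasDerivAt_J0 (x : ℝ) : HasDerivAt J0 (-J1 x) x := by
  rw [funext J0_eq_besselClifford]
  exact hasDerivAt_besselClifford_sq_div_four 0 x

-- `besselClifford 1 (x ^ 2 / 4) / 2` is `J1 x / x` with its removable singularity filled in.
theorem hasDerivAt_J1 (x : ℝ) : HasDerivAt J1 (J0 x - besselClifford 1 (x ^ 2 / 4) / 2) x := by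
  refine (((hasDerivAt_id x).div_const 2).mul
    (hasDerivAt_besselClifford_sq_div_four 1 x)).congr_deriv ?_
  have hrec := mul_besselClifford_add_two 0 (x ^ 2 / 4)
  rw [← J0_eq_besselClifford] at hrec
  simp only [id]
  push_cast at hrec
  linear_combination -hrec

theorem hasDerivAt_J1_of_ne_zero {x : ℝ} (hx : x ≠ 0) : HasDerivAt J1 (J0 x - J1 x / x) x :=
  (hasDerivAt_J1 x).congr_deriv (by rw [J1]; field_simp)

theorem continuous_J0 : Continuous J0 :=
  continuous_iff_continuousAt.mpr fun x ↦ (hasDerivAt_J0 x).continuousAt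

theorem continuous_J1 : Continuous J1 :=
  continuous_iff_continuousAt.mpr fun x ↦ (hasDerivAt_J1 x).continuousAt

theorem antitoneOn_J0_sq_add_J1_sq : AntitoneOn (fun x ↦ J0 x ^ 2 + J1 x ^ 2) (Ici 0) := by
  refine antitoneOn_of_hasDerivWithinAt_nonpos (f' := fun x ↦ -2 * (J1 x ^ 2 / x)) (convex_Ici 0)
    ((continuous_J0.pow 2).add (continuous_J1.pow 2)).continuousOn ?_ ?_ <;>
    rw [interior_Ici] <;> intro x (hx : 0 < x)
  · refine (((hasDerivAt_J0 x).fun_pow 2).add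
      ((hasDerivAt_J1_of_ne_zero hx.ne').fun_pow 2)).hasDerivWithinAt.congr_deriv ?_
    push_cast
    ring
  · have : 0 ≤ J1 x ^ 2 / x := by positivity
    linarith

theorem J0_sq_add_J1_sq_le_one {x : ℝ} (hx : 0 ≤ x) : J0 x ^ 2 + J1 x ^ 2 ≤ 1 := by
  simpa [J0_zero, J1_zero] using antitoneOn_J0_sq_add_J1_sq self_mem_Ici hx hx

theorem one_sub_le_J0 {x : ℝ} (hx : 0 ≤ x) : 1 - x ≤ J0 x := by
  have hderiv : ∀ y ∈ Ici (0 : ℝ), ‖-J1 y‖ ≤ 1 := fun y hy ↦ by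
    rw [norm_neg, Real.norm_eq_abs, ← sq_le_one_iff_abs_le_one]
    linarith [J0_sq_add_J1_sq_le_one hy, sq_nonneg (J0 y)]
  have hlip := (convex_Ici (0 : ℝ)).norm_image_sub_le_of_norm_hasDerivWithin_le
    (fun y _ ↦ (hasDerivAt_J0 y).hasDerivWithinAt) hderiv self_mem_Ici hx
  rw [J0_zero, sub_zero, one_mul, Real.norm_eq_abs, Real.norm_of_nonneg hx] at hlip
  linarith [neg_le_of_abs_le hlip]

theorem integral_J0_mul_sq_mul {z : ℝ} (hz : z ≠ 0) :
    ∫ r in (0 : ℝ)..1, J0 (z * r) ^ 2 * r = (J0 z ^ 2 + J1 z ^ 2) / 2 := by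
  have hJ0 : Continuous fun r ↦ J0 (z * r) := continuous_J0.comp (by fun_prop)
  have hJ1 : Continuous fun r ↦ J1 (z * r) := continuous_J1.comp (by fun_prop)
  have hderiv : ∀ r ∈ Ioo (0 : ℝ) 1, HasDerivAt
      (fun r ↦ r ^ 2 * (J0 (z * r) ^ 2 + J1 (z * r) ^ 2) / 2) (J0 (z * r) ^ 2 * r) r := by
    intro r hr
    have hr0 : r ≠ 0 := hr.1.ne'
    have hlin : HasDerivAt (fun r ↦ z * r) z r := by simpa using (hasDerivAt_id r).const_mul z
    refine (((hasDerivAt_pow 2 r).mul ((((hasDerivAt_J0 (z * r)).comp r hlin).fun_pow 2).add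
      (((hasDerivAt_J1_of_ne_zero (mul_ne_zero hz hr0)).comp r hlin).fun_pow 2))).div_const
        2).congr_deriv ?_
    simp only [Function.comp, Pi.add_apply]
    push_cast
    field_simp
    ring
  rw [intervalIntegral.integral_eq_sub_of_hasDerivAt_of_le zero_le_one
    (by fun_prop) hderiv (Continuous.intervalIntegrable (by fun_prop) _ _)]
  simp

/-! ### The equation `u'' + q u = 0` -/

/-- `u` solves `u'' + q u = 0` on `s`, with derivative `u' = v`. The derivatives are two-sided
even at boundary points of `s`. -/
structure SolvesOscillatorOn (q u v : ℝ → ℝ) (s : Set ℝ) : Prop where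
  hasDerivAt : ∀ x ∈ s, HasDerivAt u (v x) x
  hasDerivAt_deriv : ∀ x ∈ s, HasDerivAt v (-(q x * u x)) x

namespace SolvesOscillatorOn

variable {q q' u v : ℝ → ℝ} {s t : Set ℝ}

theorem mono (h : SolvesOscillatorOn q u v s) (hts : t ⊆ s) : SolvesOscillatorOn q u v t where
  hasDerivAt x hx := h.hasDerivAt x (hts hx)
  hasDerivAt_deriv x hx := h.hasDerivAt_deriv x (hts hx)

theorem neg (h : SolvesOscillatorOn q u v s) : SolvesOscillatorOn q (-u) (-v) s where
  hasDerivAt x hx := (h.hasDerivAt x hx).neg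
  hasDerivAt_deriv x hx := (h.hasDerivAt_deriv x hx).neg.congr_deriv (by simp)

theorem antitoneOn_deriv_sq_add (h : SolvesOscillatorOn q u v s) (hs : Convex ℝ s)
    (hq : ∀ x ∈ s, HasDerivAt q (q' x) x) (hq' : ∀ x ∈ s, q' x ≤ 0) :
    AntitoneOn (fun x ↦ v x ^ 2 + q x * u x ^ 2) s := by
  have hderiv : ∀ x ∈ s, HasDerivAt (fun x ↦ v x ^ 2 + q x * u x ^ 2) (q' x * u x ^ 2) x := by
    intro x hx
    refine (((h.hasDerivAt_deriv x hx).fun_pow 2).add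
      ((hq x hx).mul ((h.hasDerivAt x hx).fun_pow 2))).congr_deriv ?_
    push_cast
    ring
  exact antitoneOn_of_hasDerivWithinAt_nonpos hs (HasDerivAt.continuousOn hderiv)
    (fun x hx ↦ (hderiv x (interior_subset hx)).hasDerivWithinAt)
    fun x hx ↦ mul_nonpos_of_nonpos_of_nonneg (hq' x (interior_subset hx)) (sq_nonneg _)

theorem monotoneOn_sq_add_deriv_sq_div (h : SolvesOscillatorOn q u v s) (hs : Convex ℝ s)
    (hq : ∀ x ∈ s, HasDerivAt q (q' x) x) (hq' : ∀ x ∈ s, q' x ≤ 0) (hq0 : ∀ x ∈ s, q x ≠ 0) :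
    MonotoneOn (fun x ↦ u x ^ 2 + v x ^ 2 / q x) s := by
  have hderiv : ∀ x ∈ s, HasDerivAt (fun x ↦ u x ^ 2 + v x ^ 2 / q x)
      (-q' x * (v x / q x) ^ 2) x := by
    intro x hx
    have := hq0 x hx
    refine (((h.hasDerivAt x hx).fun_pow 2).add
      (((h.hasDerivAt_deriv x hx).fun_pow 2).div (hq x hx) this)).congr_deriv ?_
    push_cast
    field_simp
    ring
  exact monotoneOn_of_hasDerivWithinAt_nonneg hs (HasDerivAt.continuousOn hderiv)
    (fun x hx ↦ (hderiv x (interior_subset hx)).hasDerivWithinAt)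
    fun x hx ↦ mul_nonneg (neg_nonneg.mpr (hq' x (interior_subset hx))) (sq_nonneg _)

variable {a ω : ℝ}

-- The antitone function is the Wronskian of `u` and the comparison solution `sin (ω (x - a))`.
theorem antitoneOn_wronskian_sin (h : SolvesOscillatorOn q u v (Icc a (a + Real.pi / ω)))
    (hω : 0 < ω) (hq : ∀ x ∈ Icc a (a + Real.pi / ω), ω ^ 2 ≤ q x)
    (hu : ∀ x ∈ Icc a (a + Real.pi / ω), 0 ≤ u x) :
    AntitoneOn (fun x ↦ v x * Real.sin (ω * (x - a)) - u x * (ω * Real.cos (ω * (x - a))))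
      (Icc a (a + Real.pi / ω)) := by
  have hderiv : ∀ x ∈ Icc a (a + Real.pi / ω), HasDerivAt
      (fun x ↦ v x * Real.sin (ω * (x - a)) - u x * (ω * Real.cos (ω * (x - a))))
      ((ω ^ 2 - q x) * (u x * Real.sin (ω * (x - a)))) x := by
    intro x hx
    have hlin : HasDerivAt (fun x ↦ ω * (x - a)) ω x := by
      simpa using ((hasDerivAt_id x).sub_const a).const_mul ω
    exact (((h.hasDerivAt_deriv x hx).mul hlin.sin).sub
      ((h.hasDerivAt x hx).mul (hlin.cos.const_mul ω))).congr_deriv (by ring)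
  have hsin : ∀ x ∈ Icc a (a + Real.pi / ω), 0 ≤ Real.sin (ω * (x - a)) := by
    intro x ⟨hax, hxb⟩
    refine Real.sin_nonneg_of_nonneg_of_le_pi (mul_nonneg hω.le (sub_nonneg.mpr hax)) ?_
    rw [← le_div_iff₀' hω]
    linarith
  refine antitoneOn_of_hasDerivWithinAt_nonpos (convex_Icc _ _) (HasDerivAt.continuousOn hderiv)
    (fun x hx ↦ (hderiv x (interior_subset hx)).hasDerivWithinAt) fun x hx ↦ ?_
  replace hx := interior_subset hx
  exact mul_nonpos_of_nonpos_of_nonneg (sub_nonpos.mpr (hq x hx))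
    (mul_nonneg (hu x hx) (hsin x hx))

theorem not_forall_pos (h : SolvesOscillatorOn q u v (Icc a (a + Real.pi / ω))) (hω : 0 < ω)
    (hq : ∀ x ∈ Icc a (a + Real.pi / ω), ω ^ 2 ≤ q x) :
    ¬ ∀ x ∈ Ioc a (a + Real.pi / ω), 0 < u x := by
  intro hpos
  have hab : a < a + Real.pi / ω := lt_add_of_pos_right a (by positivity)
  have hua : 0 ≤ u a := by
    have hcont : ContinuousWithinAt u (Ioc a (a + Real.pi / ω)) a :=
      (h.hasDerivAt a (left_mem_Icc.mpr hab.le)).continuousAt.continuousWithinAt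
    have : (nhdsWithin a (Ioc a (a + Real.pi / ω))).NeBot := left_nhdsWithin_Ioc_neBot hab
    exact ge_of_tendsto hcont (eventually_nhdsWithin_of_forall fun x hx ↦ (hpos x hx).le)
  have hnonneg : ∀ x ∈ Icc a (a + Real.pi / ω), 0 ≤ u x := fun x hx ↦
    hx.1.eq_or_lt.elim (fun hax ↦ hax ▸ hua) fun hax ↦ (hpos x ⟨hax, hx.2⟩).le
  have hwronskian := h.antitoneOn_wronskian_sin hω hq hnonneg
    (left_mem_Icc.mpr hab.le) (right_mem_Icc.mpr hab.le) hab.le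
  have hphase : ω * (a + Real.pi / ω - a) = Real.pi := by field_simp; ring
  simp only [hphase, sub_self, mul_zero, Real.sin_zero, Real.cos_zero, Real.sin_pi,
    Real.cos_pi] at hwronskian
  nlinarith [hpos (a + Real.pi / ω) (right_mem_Ioc.mpr hab)]

theorem exists_eq_zero_mem_Ioc (h : SolvesOscillatorOn q u v (Icc a (a + Real.pi / ω)))
    (hω : 0 < ω) (hq : ∀ x ∈ Icc a (a + Real.pi / ω), ω ^ 2 ≤ q x) :
    ∃ x ∈ Ioc a (a + Real.pi / ω), u x = 0 := by
  have hcont : ContinuousOn u (Ioc a (a + Real.pi / ω)) :=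
    HasDerivAt.continuousOn fun x hx ↦ h.hasDerivAt x (Ioc_subset_Icc_self hx)
  obtain ⟨x, hx, hux⟩ : ∃ x ∈ Ioc a (a + Real.pi / ω), u x ≤ 0 := by
    simpa [and_assoc] using h.not_forall_pos hω hq
  obtain ⟨y, hy, huy⟩ : ∃ y ∈ Ioc a (a + Real.pi / ω), 0 ≤ u y := by
    simpa [and_assoc] using h.neg.not_forall_pos hω hq
  exact isPreconnected_Ioc.intermediate_value hx hy hcont ⟨hux, huy⟩

end SolvesOscillatorOn

/-! ### Decay and zeros of `J0` -/

theorem solvesOscillatorOn_sqrt_mul_J0 :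
    SolvesOscillatorOn (fun x ↦ 1 + 1 / (4 * x ^ 2)) (fun x ↦ √x * J0 x)
      (fun x ↦ √x * (J0 x / (2 * x) - J1 x)) (Ioi 0) where
  hasDerivAt x hx := by
    have hx0 : 0 < x := hx
    have hsq : √x ^ 2 = x := Real.sq_sqrt hx0.le
    refine ((Real.hasDerivAt_sqrt hx0.ne').mul (hasDerivAt_J0 x)).congr_deriv ?_
    field_simp
    rw [hsq]
    ring
  hasDerivAt_deriv x hx := by
    have hx0 : 0 < x := hx
    have hsq : √x ^ 2 = x := Real.sq_sqrt hx0.le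
    have hlin : HasDerivAt (fun x : ℝ ↦ 2 * x) 2 x := by
      simpa using (hasDerivAt_id x).const_mul 2
    refine ((Real.hasDerivAt_sqrt hx0.ne').mul (((hasDerivAt_J0 x).fun_div hlin
      (by positivity)).fun_sub (hasDerivAt_J1_of_ne_zero hx0.ne'))).congr_deriv ?_
    field_simp
    rw [hsq]
    ring

theorem hasDerivAt_one_add_one_div_four_mul_sq {x : ℝ} (hx : x ≠ 0) :
    HasDerivAt (fun x : ℝ ↦ 1 + 1 / (4 * x ^ 2)) (-(1 / (2 * x ^ 3))) x := by
  refine ((((hasDerivAt_pow 2 x).const_mul 4).fun_inv (by positivity)).const_add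
    1).congr_of_eventuallyEq (.of_forall fun y ↦ by simp) |>.congr_deriv ?_
  push_cast
  field_simp
  ring

theorem mul_J0_sq_le_two {x : ℝ} (hx : 0 ≤ x) : x * J0 x ^ 2 ≤ 2 := by
  have henergy := J0_sq_add_J1_sq_le_one hx
  rcases le_total x (1 / 2) with hx2 | hx2
  · nlinarith [sq_nonneg (J0 x), sq_nonneg (J1 x)]
  have hx0 : 0 < x := by linarith
  have hanti := (solvesOscillatorOn_sqrt_mul_J0.mono (Ici_subset_Ioi.mpr one_half_pos)
    |>.antitoneOn_deriv_sq_add (convex_Ici _)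
      (fun y hy ↦ hasDerivAt_one_add_one_div_four_mul_sq (one_half_pos.trans_le hy).ne')
      fun y (hy : 1 / 2 ≤ y) ↦ by
        have : 0 < y := by linarith
        exact neg_nonpos.mpr (by positivity)) self_mem_Ici hx2 hx2
  simp only [mul_pow, Real.sq_sqrt hx0.le, Real.sq_sqrt one_half_pos.le] at hanti
  have hhalf := J0_sq_add_J1_sq_le_one one_half_pos.le
  calc x * J0 x ^ 2 ≤ x * (J0 x / (2 * x) - J1 x) ^ 2 +
        (1 + 1 / (4 * x ^ 2)) * (x * J0 x ^ 2) := by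
        have : 0 ≤ x * (J0 x / (2 * x) - J1 x) ^ 2 := by positivity
        have : 0 ≤ 1 / (4 * x ^ 2) * (x * J0 x ^ 2) := by positivity
        linarith
    _ ≤ _ := hanti
    _ ≤ 2 := by
        norm_num
        nlinarith [sq_nonneg (J0 (1 / 2) + J1 (1 / 2)), sq_nonneg (J1 (1 / 2))]

theorem one_add_mul_J0_sq_le_three {x : ℝ} (hx : 0 ≤ x) : (1 + x) * J0 x ^ 2 ≤ 3 := by
  linarith [mul_J0_sq_le_two hx, J0_sq_add_J1_sq_le_one hx, sq_nonneg (J1 x)]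

theorem one_eighth_le_mul_J1_sq {x : ℝ} (hx : 0 < x) (hJ0 : J0 x = 0) :
    1 / 8 ≤ x * J1 x ^ 2 := by
  have hx2 : 1 / 2 ≤ x := by linarith [one_sub_le_J0 hx.le]
  have hmono := (solvesOscillatorOn_sqrt_mul_J0.mono (Ici_subset_Ioi.mpr one_half_pos)
    |>.monotoneOn_sq_add_deriv_sq_div (convex_Ici _)
      (fun y hy ↦ hasDerivAt_one_add_one_div_four_mul_sq (one_half_pos.trans_le hy).ne')
      (fun y (hy : 1 / 2 ≤ y) ↦ by
        have : 0 < y := by linarith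
        exact neg_nonpos.mpr (by positivity))
      fun y _ ↦ by positivity) self_mem_Ici hx2 hx2
  simp only [mul_pow, Real.sq_sqrt hx.le, Real.sq_sqrt one_half_pos.le, hJ0] at hmono
  have hhalf : 1 / 2 ≤ J0 (1 / 2) := by linarith [one_sub_le_J0 one_half_pos.le]
  calc (1 : ℝ) / 8 ≤ 1 / 2 * J0 (1 / 2) ^ 2 := by nlinarith
    _ ≤ 1 / 2 * J0 (1 / 2) ^ 2 + _ := le_add_of_nonneg_right (by positivity)
    _ ≤ _ := hmono
    _ = x * J1 x ^ 2 / (1 + 1 / (4 * x ^ 2)) := by ring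
    _ ≤ x * J1 x ^ 2 := div_le_self (by positivity) (le_add_of_nonneg_right (by positivity))

theorem exists_J0_eq_zero_mem_Ioc {a : ℝ} (ha : 0 < a) :
    ∃ x ∈ Ioc a (a + Real.pi), J0 x = 0 := by
  have hsub : Icc a (a + Real.pi / 1) ⊆ Ioi 0 := fun x hx ↦ ha.trans_le hx.1
  obtain ⟨x, hx, hux⟩ := (solvesOscillatorOn_sqrt_mul_J0.mono hsub).exists_eq_zero_mem_Ioc
    one_pos fun x _ ↦ by rw [one_pow]; exact le_add_of_nonneg_right (by positivity)
  rw [div_one] at hx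
  exact ⟨x, hx, (mul_eq_zero.mp hux).resolve_left (Real.sqrt_pos.mpr (ha.trans hx.1)).ne'⟩

theorem le_add_mul_of_forall_exists_le_add {z : ℕ → ℝ} {k : ℕ} {L : ℝ}
    (hz : StrictMonoOn z (Ici k)) (hgap : ∀ n, k ≤ n → ∃ m, k ≤ m ∧ z m ∈ Ioc (z n) (z n + L))
    {n : ℕ} (hn : k ≤ n) : z n ≤ z k + (n - k) * L := by
  induction n, hn using Nat.le_induction with
  | base => simp
  | succ n hn ih =>
    obtain ⟨m, hm, hlt, hle⟩ := hgap n hn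
    have hsucc : z (n + 1) ≤ z m :=
      hz.monotoneOn (hn.trans n.le_succ) hm ((hz.lt_iff_lt hn hm).mp hlt)
    push_cast
    linarith

/-! ### The eigenfunctions -/

section Eigenfunctions

variable {z : ℕ → ℝ} {m n : ℕ}

theorem besselL2_sq (hz : z n ≠ 0) :
    besselL2 z n ^ 2 = Real.pi * (J0 (z n) ^ 2 + J1 (z n) ^ 2) := by
  rw [besselL2, integral_J0_mul_sq_mul hz, Real.sq_sqrt (by positivity)]
  ring

theorem continuous_efun : Continuous (efun z n) :=
  (continuous_J0.comp (continuous_const_mul (z n))).div_const _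

theorem efun_sq_le (hz : 0 < z n) (hJ0 : J0 (z n) = 0) {r : ℝ} (hr : 0 ≤ r) :
    efun z n r ^ 2 ≤ 8 * (z n / (1 + z n * r)) := by
  have hdecay := one_add_mul_J0_sq_le_three (mul_nonneg hz.le hr)
  have hnorm : 3 ≤ 8 * (z n * besselL2 z n ^ 2) := by
    rw [besselL2_sq hz.ne', hJ0]
    nlinarith [one_eighth_le_mul_J1_sq hz hJ0, Real.pi_gt_three]
  have hpos : 0 < besselL2 z n ^ 2 := pos_of_mul_pos_right (a := z n) (by linarith) hz.le
  rw [efun, div_pow, ← mul_div_assoc, div_le_div_iff₀ hpos (by positivity)]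
  linarith

theorem integral_div_one_add_mul {a : ℝ} (ha : 0 ≤ a) :
    ∫ r in (0 : ℝ)..1, a / (1 + a * r) = Real.log (1 + a) := by
  have hpos : ∀ r ∈ uIcc (0 : ℝ) 1, 0 < 1 + a * r := fun r hr ↦ by
    rw [uIcc_of_le zero_le_one] at hr
    have := hr.1
    positivity
  have hderiv : ∀ r ∈ uIcc (0 : ℝ) 1,
      HasDerivAt (fun r ↦ Real.log (1 + a * r)) (a / (1 + a * r)) r := fun r hr ↦ by
    simpa using (((hasDerivAt_id r).const_mul a).const_add 1).log (hpos r hr).ne'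
  rw [intervalIntegral.integral_eq_sub_of_hasDerivAt hderiv]
  · simp
  · exact (ContinuousOn.div (by fun_prop) (by fun_prop)
      fun r hr ↦ (hpos r hr).ne').intervalIntegrable

theorem integral_efun_mul_efun_sq_le_log (hn : 0 < z n) (hJ0n : J0 (z n) = 0)
    (hm : 0 < z m) (hJ0m : J0 (z m) = 0) :
    ∫ r in (0 : ℝ)..1, (efun z n r * efun z m r) ^ 2 * r ≤ 64 * Real.log (1 + z n) := by
  have hpointwise : ∀ r ∈ Icc (0 : ℝ) 1,
      (efun z n r * efun z m r) ^ 2 * r ≤ 64 * (z n / (1 + z n * r)) := by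
    intro r ⟨hr, _⟩
    have hsnd : efun z m r ^ 2 * r ≤ 8 := by
      calc efun z m r ^ 2 * r ≤ 8 * (z m / (1 + z m * r)) * r := by
            gcongr
            exact efun_sq_le hm hJ0m hr
        _ = 8 * (z m * r / (1 + z m * r)) := by ring
        _ ≤ 8 := mul_le_of_le_one_right (by norm_num) (div_le_one_of_le₀ (by linarith)
            (by positivity))
    calc (efun z n r * efun z m r) ^ 2 * r = efun z n r ^ 2 * (efun z m r ^ 2 * r) := by ring
      _ ≤ 8 * (z n / (1 + z n * r)) * 8 :=
        mul_le_mul (efun_sq_le hn hJ0n hr) hsnd (by positivity) (by positivity)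
      _ = 64 * (z n / (1 + z n * r)) := by ring
  have hcont : ContinuousOn (fun r ↦ 64 * (z n / (1 + z n * r))) (uIcc 0 1) := by
    refine continuousOn_const.mul (ContinuousOn.div (by fun_prop) (by fun_prop) fun r hr ↦ ?_)
    rw [uIcc_of_le zero_le_one] at hr
    have := hr.1
    positivity
  calc ∫ r in (0 : ℝ)..1, (efun z n r * efun z m r) ^ 2 * r
      ≤ ∫ r in (0 : ℝ)..1, 64 * (z n / (1 + z n * r)) :=
        intervalIntegral.integral_mono_on zero_le_one
          (((((continuous_efun.mul continuous_efun).pow 2).mul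
            continuous_id).intervalIntegrable) _ _) hcont.intervalIntegrable hpointwise
    _ = 64 * Real.log (1 + z n) := by
        rw [intervalIntegral.integral_const_mul, integral_div_one_add_mul hn.le]

theorem log_one_add_zero_le (hzpos : ∀ n, 1 ≤ n → 0 < z n)
    (hzmono : ∀ m n, 1 ≤ m → m < n → z m < z n)
    (hzall : ∀ x : ℝ, 0 < x → J0 x = 0 → ∃ n, 1 ≤ n ∧ z n = x) (hn : 1 ≤ n) :
    Real.log (1 + z n) ≤ (z 1 + Real.pi) * Real.log (1 + n) := by
  have hgap : ∀ n, 1 ≤ n → ∃ m, 1 ≤ m ∧ z m ∈ Ioc (z n) (z n + Real.pi) := fun n hn ↦ by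
    obtain ⟨x, hx, hJ0x⟩ := exists_J0_eq_zero_mem_Ioc (hzpos n hn)
    obtain ⟨m, hm, rfl⟩ := hzall x ((hzpos n hn).trans hx.1) hJ0x
    exact ⟨m, hm, hx⟩
  have hlinear := le_add_mul_of_forall_exists_le_add
    (fun m hm n _ hmn ↦ hzmono m n hm hmn) hgap hn
  have hz1 := hzpos 1 le_rfl
  have hn1 : (1 : ℝ) ≤ n := mod_cast hn
  have hBernoulli : 1 + z n ≤ (1 + n : ℝ) ^ (z 1 + Real.pi) :=
    calc 1 + z n ≤ 1 + (z 1 + Real.pi) * n := by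
          push_cast at hlinear
          nlinarith [Real.pi_pos]
      _ ≤ (1 + n : ℝ) ^ (z 1 + Real.pi) :=
          one_add_mul_self_le_rpow_one_add (by linarith) (by linarith [Real.pi_gt_three])
  rw [← Real.log_rpow (by positivity)]
  exact Real.log_le_log (by linarith [hzpos n hn]) hBernoulli

end Eigenfunctions

theorem sqrt_log_one_add_le_rpow {ε x : ℝ} (hε : 0 < ε) (hx : 1 ≤ x) :
    √(Real.log (1 + x)) ≤ 2 ^ ε / √(2 * ε) * x ^ ε := by
  have hlog : Real.log (1 + x) ≤ (2 * x) ^ (2 * ε) / (2 * ε) :=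
    (Real.log_le_log (by positivity) (by linarith)).trans
      (Real.log_le_rpow_div (by positivity) (by positivity))
  calc √(Real.log (1 + x)) ≤ √(((2 * x) ^ ε) ^ 2 / (2 * ε)) := by
        rw [← Real.rpow_mul_natCast (by positivity), mul_comm ε]
        exact Real.sqrt_le_sqrt hlog
    _ = 2 ^ ε / √(2 * ε) * x ^ ε := by
        rw [Real.sqrt_div (by positivity), Real.sqrt_sq (by positivity),
          Real.mul_rpow (by positivity) (by positivity)]
        ring

theorem eigenfunction_bilinear_L2_general
    (z : ℕ → ℝ)
    (hzpos : ∀ n, 1 ≤ n → 0 < z n)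
    (hzmono : ∀ m n, 1 ≤ m → m < n → z m < z n)
    (hzzero : ∀ n, 1 ≤ n → J0 (z n) = 0)
    (hzall : ∀ x : ℝ, 0 < x → J0 x = 0 → ∃ n, 1 ≤ n ∧ z n = x) :
    ∃ C : ℝ, 0 < C ∧ ∀ n₁ n₂ : ℕ, 1 ≤ n₁ → 1 ≤ n₂ →
      √(2 * Real.pi * ∫ r in (0 : ℝ)..1, (efun z n₁ r * efun z n₂ r) ^ 2 * r) ≤
        C * √(Real.log (1 + (min n₁ n₂ : ℕ))) := by
  have hz1 := hzpos 1 le_rfl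
  refine ⟨√(2 * Real.pi * (64 * (z 1 + Real.pi))), by positivity, fun n₁ n₂ h₁ h₂ ↦ ?_⟩
  wlog hle : n₁ ≤ n₂ generalizing n₁ n₂
  · simpa only [mul_comm (efun z n₁ _), min_comm n₁] using this n₂ n₁ h₂ h₁ (le_of_not_ge hle)
  rw [min_eq_left hle, ← Real.sqrt_mul (by positivity), mul_assoc (2 * Real.pi)]
  gcongr
  calc ∫ r in (0 : ℝ)..1, (efun z n₁ r * efun z n₂ r) ^ 2 * r
      ≤ 64 * Real.log (1 + z n₁) := integral_efun_mul_efun_sq_le_log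
        (hzpos n₁ h₁) (hzzero n₁ h₁) (hzpos n₂ h₂) (hzzero n₂ h₂)
    _ ≤ 64 * ((z 1 + Real.pi) * Real.log (1 + n₁)) := by
        gcongr
        exact log_one_add_zero_le hzpos hzmono hzall h₁
    _ = 64 * (z 1 + Real.pi) * Real.log (1 + n₁) := by ring

/-- Bilinear eigenfunction estimate: for every `ε > 0` there is `C_ε` with
`‖e_{n₁} e_{n₂}‖_{L²(Θ)} ≤ C_ε (min(n₁,n₂))^ε` for all `n₁, n₂ ≥ 1`. -/
theorem eigenfunction_bilinear_L2
    (z : ℕ → ℝ)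
    (hzpos : ∀ n, 1 ≤ n → 0 < z n)
    (hzmono : ∀ m n, 1 ≤ m → m < n → z m < z n)
    (hzzero : ∀ n, 1 ≤ n → J0 (z n) = 0)
    (hzall : ∀ x : ℝ, 0 < x → J0 x = 0 → ∃ n, 1 ≤ n ∧ z n = x) :
    ∀ ε : ℝ, 0 < ε → ∃ C : ℝ, 0 < C ∧ ∀ n₁ n₂ : ℕ, 1 ≤ n₁ → 1 ≤ n₂ →
      Real.sqrt (2 * Real.pi * ∫ r in (0 : ℝ)..1, (efun z n₁ r * efun z n₂ r) ^ 2 * r) ≤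
        C * ((min n₁ n₂ : ℕ) : ℝ) ^ ε := by
  intro ε hε
  obtain ⟨C, hC, hlog⟩ := eigenfunction_bilinear_L2_general z hzpos hzmono hzzero hzall
  refine ⟨C * (2 ^ ε / √(2 * ε)), by positivity, fun n₁ n₂ h₁ h₂ ↦ (hlog n₁ n₂ h₁ h₂).trans ?_⟩
  rw [mul_assoc]
  gcongr
  exact sqrt_log_one_add_le_rpow hε (mod_cast le_min h₁ h₂)
end

section
/- For every ε > 0 there exists C_ε > 0 such that for every τ ∈ ℝ, all N₁, N₂ ≥ 1 and all L₁, L₂ ≥ 1, the set Λ(τ, L₁, L₂, N₁, N₂) = { (τ₁, n₁, n₂) ∈ ℝ × ℕ × ℕ : L₁ ≤ ⟨τ₁ + z_{n₁}²⟩ ≤ 2L₁, L₂ ≤ ⟨τ − τ₁ + z_{n₂}²⟩ ≤ 2L₂, ⟨z_{n₁}⟩ ∈ [N₁, 2N₁], ⟨z_{n₂}⟩ ∈ [N₂, 2N₂] } satisfies |Λ(τ, L₁, L₂, N₁, N₂)| ≤ C_ε (min(N₁, N₂))^ε L₁ L₂, where |Λ| denotes its measure with respect to the product of Lebesgue measure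 in τ₁ and counting measure in (n₁, n₂). -/
open MeasureTheory

/-! A zero `z` of `J₀` satisfies `z² = (π² / 16) m² + O(1)` for some integer `m`: Cauchy's theorem
moves Poisson's integral for `J₀` to two vertical half-lines, which gives
`J₀ x = √(2 / (π x)) cos (x - π / 4) + O(x ^ (-3/2))`. Since the energy `J₀² + J₀'²` decreases while
`x²` times it increases, the zeros are also separated.

Each section of `Λ` in `τ₁` has length at most `4 min(L₁, L₂)`, and is empty unless
`|z_{n₁}² + z_{n₂}² + τ| ≤ M`, where `M = 4 max(L₁, L₂)`. Let `N₁ ≤ N₂`. Replacing the zeros by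
their integers `m` maps the pairs allowed by this condition, boundedly many to one, to Gaussian
integers whose norms lie in an interval of length `O(M)`. There are `O(n ^ δ)` Gaussian integers of
norm `n`, which gives `O(N₁ ^ ε M)` pairs as long as `N₂ ≤ N₁²`. For larger `N₂` the gaps `≳ N₂`
between the squares of the zeros near `N₂` suffice: if `M ≤ N₁` they leave `O(1)` choices of `n₂`,
each with `O(1 + M / N₁)` choices of `n₁`, and if `M ≥ N₁` they leave `O(1 + M / N₂)` choices of
`n₂` for each of the `O(N₁)` choices of `n₁`.
-/

namespace BesselZeros

section BesselODE

open Real Set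

lemma prod_odd_div_even (j : ℕ) :
    ∏ i ∈ Finset.range j, (2 * (i : ℝ) + 1) / (2 * i + 2) =
      ((2 * j).factorial : ℝ) / (4 ^ j * (j.factorial : ℝ) ^ 2) := by
  induction j with
  | zero => simp
  | succ k ih =>
    rw [Finset.prod_range_succ, ih, show 2 * (k + 1) = 2 * k + 1 + 1 by ring]
    simp only [Nat.factorial_succ]
    have : (k.factorial : ℝ) ≠ 0 := by positivity
    push_cast
    field_simp
    ring

lemma hasSum_integral_cos_mul_sin (x : ℝ) :
    HasSum (fun j : ℕ =>
        ∫ θ in 0..π, (-1 : ℝ) ^ j * (x * sin θ) ^ (2 * j) / ((2 * j).factorial : ℝ))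
      (∫ θ in 0..π, cos (x * sin θ)) := by
  have hsum : Summable fun j : ℕ => |x| ^ (2 * j) / ((2 * j).factorial : ℝ) :=
    (summable_pow_div_factorial |x|).comp_injective (mul_right_injective₀ two_ne_zero)
  refine intervalIntegral.hasSum_integral_of_dominated_convergence
    (fun j _ => |x| ^ (2 * j) / ((2 * j).factorial : ℝ))
    (fun j => (by fun_prop : Continuous _).aestronglyMeasurable) (fun j => .of_forall fun θ _ => ?_)
    (.of_forall fun _ _ => hsum) intervalIntegrable_const
    (.of_forall fun θ _ => hasSum_cos _)
  rw [norm_div, norm_mul, norm_pow, norm_pow, norm_neg, norm_one, one_pow, one_mul, norm_mul,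
    norm_eq_abs, norm_eq_abs, norm_eq_abs, Nat.abs_cast]
  gcongr
  exact mul_le_of_le_one_right (abs_nonneg x) (abs_sin_le_one θ)

lemma integral_cos_mul_sin_term (x : ℝ) (j : ℕ) :
    ∫ θ in 0..π, (-1 : ℝ) ^ j * (x * sin θ) ^ (2 * j) / ((2 * j).factorial : ℝ) =
      π * ((-1 : ℝ) ^ j / (j.factorial : ℝ) ^ 2 * (x / 2) ^ (2 * j)) := by
  have hfactor (θ : ℝ) : (-1 : ℝ) ^ j * (x * sin θ) ^ (2 * j) / ((2 * j).factorial : ℝ) =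
      (-1 : ℝ) ^ j * x ^ (2 * j) / ((2 * j).factorial : ℝ) * sin θ ^ (2 * j) := by
    rw [mul_pow]; ring
  have hfact : ((2 * j).factorial : ℝ) ≠ 0 := by positivity
  simp_rw [hfactor]
  rw [intervalIntegral.integral_const_mul, integral_sin_pow_even, prod_odd_div_even, div_pow,
    pow_mul 2 2 j]
  norm_num
  field_simp

lemma J0_eq_integral (x : ℝ) : J0 x = 1 / π * ∫ θ in 0..π, cos (x * sin θ) := by
  rw [← (hasSum_integral_cos_mul_sin x).tsum_eq]
  simp_rw [integral_cos_mul_sin_term]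
  rw [tsum_mul_left, ← mul_assoc, one_div_mul_cancel pi_ne_zero, one_mul, J0]

/-- The Bessel function of order one, defined by Bessel's integral; it is `-J0'`. -/
noncomputable def J1 (x : ℝ) : ℝ := 1 / π * ∫ θ in 0..π, sin θ * sin (x * sin θ)

lemma hasDerivAt_integral_of_continuous {E : Type*} [NormedAddCommGroup E] [NormedSpace ℝ E]
    {f f' : ℝ → ℝ → E} (hf : ∀ x, Continuous (f x)) (hf' : Continuous (Function.uncurry f'))
    (hderiv : ∀ x θ, HasDerivAt (fun y => f y θ) (f' x θ) x) (a b x : ℝ) :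
    HasDerivAt (fun y => ∫ θ in a..b, f y θ) (∫ θ in a..b, f' x θ) x := by
  obtain ⟨C, hC⟩ := ((isCompact_closedBall x 1).prod (isCompact_uIcc (a := a) (b := b))
    ).exists_bound_of_continuousOn hf'.continuousOn
  exact (intervalIntegral.hasDerivAt_integral_of_dominated_loc_of_deriv_le (bound := fun _ => C)
    (Metric.closedBall_mem_nhds x one_pos) (.of_forall fun y => (hf y).aestronglyMeasurable)
    ((hf x).intervalIntegrable _ _) (by fun_prop : Continuous (f' x)).aestronglyMeasurable
    (.of_forall fun θ hθ y hy => hC (y, θ) ⟨hy, uIoc_subset_uIcc hθ⟩) intervalIntegrable_const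
    (.of_forall fun θ _ y _ => hderiv y θ)).2

lemma hasDerivAt_J0 (x : ℝ) : HasDerivAt J0 (-J1 x) x := by
  have h := (hasDerivAt_integral_of_continuous (f := fun y θ => cos (y * sin θ))
    (f' := fun y θ => -sin (y * sin θ) * sin θ) (fun y => by fun_prop) (by fun_prop)
    (fun y θ => (hasDerivAt_mul_const (sin θ)).cos) 0 π x).const_mul (1 / π)
  rw [funext J0_eq_integral, J1, ← mul_neg, ← intervalIntegral.integral_neg]
  convert! h using 4
  ring

/-- Bessel's equation, as an equation for `J1 = -J0'`. -/
lemma hasDerivAt_J1 {x : ℝ} (hx : x ≠ 0) : HasDerivAt J1 (J0 x - J1 x / x) x := by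
  have h := (hasDerivAt_integral_of_continuous (f := fun y θ => sin θ * sin (y * sin θ))
    (f' := fun y θ => sin θ * (cos (y * sin θ) * sin θ)) (fun y => by fun_prop) (by fun_prop)
    (fun y θ => (hasDerivAt_mul_const (sin θ)).sin.const_mul _) 0 π x).const_mul (1 / π)
  have hparts := intervalIntegral.integral_eq_sub_of_hasDerivAt (a := 0) (b := π)
    (f := fun θ => cos θ * sin (x * sin θ))
    (f' := fun θ => -sin θ * sin (x * sin θ) + cos θ * (cos (x * sin θ) * (x * cos θ)))
    (fun θ _ => (hasDerivAt_cos θ).mul ((hasDerivAt_sin θ).const_mul x).sin)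
    ((by fun_prop : Continuous _).intervalIntegrable _ _)
  have hsplit (θ : ℝ) : -sin θ * sin (x * sin θ) + cos θ * (cos (x * sin θ) * (x * cos θ)) =
      x * (cos (x * sin θ) - sin θ * (cos (x * sin θ) * sin θ)) - sin θ * sin (x * sin θ) := by
    linear_combination x * cos (x * sin θ) * sin_sq_add_cos_sq θ
  simp only [hsplit, sin_pi, sin_zero, mul_zero, sub_zero] at hparts
  rw [intervalIntegral.integral_sub, intervalIntegral.integral_const_mul,
    intervalIntegral.integral_sub] at hparts
  rotate_left 4
  any_goals exact (by fun_prop : Continuous _).intervalIntegrable _ _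
  convert! h using 1
  refine mul_left_cancel₀ hx ?_
  rw [mul_sub, mul_div_cancel₀ _ hx, J0_eq_integral, J1]
  linear_combination 1 / π * hparts

lemma J0_zero : J0 0 = 1 := by
  simp [J0_eq_integral]

lemma exists_forall_Ioc_J0_ne_zero : ∃ r > 0, ∀ x ∈ Ioc 0 r, J0 x ≠ 0 := by
  have hev : ∀ᶠ x in nhdsWithin 0 (Ioi 0), J0 x ≠ 0 :=
    nhdsWithin_le_nhds ((hasDerivAt_J0 0).continuousAt.eventually_ne (J0_zero ▸ one_ne_zero))
  obtain ⟨r, hr, hsub⟩ := mem_nhdsGT_iff_exists_Ioc_subset.1 hev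
  exact ⟨r, hr, fun x hx => hsub hx⟩

/-- The energy of Bessel's equation. It decreases on `(0, ∞)` while `x ^ 2` times it increases, so
it can neither oscillate nor decay fast; this is what keeps consecutive zeros of `J0` apart. -/
noncomputable def energy (x : ℝ) : ℝ := J0 x ^ 2 + J1 x ^ 2

lemma hasDerivAt_energy {x : ℝ} (hx : x ≠ 0) : HasDerivAt energy (-(2 * J1 x ^ 2 / x)) x := by
  convert! ((hasDerivAt_J0 x).pow 2).add ((hasDerivAt_J1 hx).pow 2) using 1
  simp only [Nat.cast_ofNat, Nat.add_one_sub_one, pow_one]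
  ring

lemma antitoneOn_energy : AntitoneOn energy (Ioi 0) := by
  refine antitoneOn_of_hasDerivWithinAt_nonpos (convex_Ioi 0)
    (fun x hx => (hasDerivAt_energy (ne_of_gt hx)).continuousAt.continuousWithinAt)
    (fun x hx => (hasDerivAt_energy (ne_of_gt (interior_subset hx))).hasDerivWithinAt)
    fun x hx => neg_nonpos.2 ?_
  have : 0 < x := interior_subset hx
  positivity

lemma monotoneOn_sq_mul_energy : MonotoneOn (fun x => x ^ 2 * energy x) (Ioi 0) := by
  have hderiv {x : ℝ} (hx : 0 < x) :
      HasDerivAt (fun x => x ^ 2 * energy x) (2 * x * J0 x ^ 2) x := by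
    convert! (hasDerivAt_pow 2 x).mul (hasDerivAt_energy hx.ne') using 1
    simp only [energy, Nat.cast_ofNat, Nat.add_one_sub_one, pow_one]
    field_simp
    ring
  refine monotoneOn_of_hasDerivWithinAt_nonneg (convex_Ioi 0)
    (fun x hx => (hderiv hx).continuousAt.continuousWithinAt)
    (fun x hx => (hderiv (interior_subset hx)).hasDerivWithinAt) fun x hx => ?_
  have : 0 < x := interior_subset hx
  positivity

lemma energy_pos {a : ℝ} (ha : 0 < a) : 0 < energy a := by
  obtain ⟨r, hr, hne⟩ := exists_forall_Ioc_J0_ne_zero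
  have hm : 0 < min a r := lt_min ha hr
  have hJ : J0 (min a r) ≠ 0 := hne _ ⟨hm, min_le_right _ _⟩
  have hmono : min a r ^ 2 * energy (min a r) ≤ a ^ 2 * energy a :=
    monotoneOn_sq_mul_energy hm ha (min_le_left a r)
  refine pos_of_mul_pos_right (lt_of_lt_of_le ?_ hmono) (sq_nonneg a)
  rw [energy]
  positivity

lemma abs_J0_sub_le {a b : ℝ} (ha : 0 < a) (hab : a ≤ b) :
    |J0 b - J0 a| ≤ √(energy a) * (b - a) := by
  have hbound (x) (hx : x ∈ Icc a b) : ‖-J1 x‖ ≤ √(energy a) := by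
    refine abs_le_sqrt ?_
    have := antitoneOn_energy ha (ha.trans_le hx.1) hx.1
    rw [neg_sq]
    exact (le_add_of_nonneg_left (sq_nonneg (J0 x))).trans this
  simpa [norm_eq_abs, abs_of_nonneg (sub_nonneg.2 hab)] using
    (convex_Icc a b).norm_image_sub_le_of_norm_hasDerivWithin_le
      (fun x _ => (hasDerivAt_J0 x).hasDerivWithinAt) hbound ⟨le_rfl, hab⟩ ⟨hab, le_rfl⟩

/-- Between two zeros `J0` has a critical point `c`, where the energy is `J0 c ^ 2`: the two
monotonicity statements compare it with the energy at the left zero. -/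
lemma le_mul_sub_of_J0_eq_zero {a b : ℝ} (ha : 0 < a) (hab : a < b) (hJa : J0 a = 0)
    (hJb : J0 b = 0) : a ≤ b * (b - a) := by
  obtain ⟨c, ⟨hac, hcb⟩, hc⟩ := exists_hasDerivAt_eq_zero hab
    (fun x _ => (hasDerivAt_J0 x).continuousAt.continuousWithinAt) (hJa.trans hJb.symm)
    (fun x _ => hasDerivAt_J0 x)
  have henergy : energy c = |J0 c - J0 a| ^ 2 := by
    rw [energy, neg_eq_zero.1 hc, hJa, sub_zero, sq_abs]; ring
  have hpos := energy_pos ha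
  have hsq : a ^ 2 * energy a ≤ (c * (c - a)) ^ 2 * energy a :=
    calc a ^ 2 * energy a ≤ c ^ 2 * energy c :=
          monotoneOn_sq_mul_energy ha (ha.trans hac) hac.le
      _ ≤ c ^ 2 * (√(energy a) * (c - a)) ^ 2 := by
          rw [henergy]; gcongr; exact abs_J0_sub_le ha hac.le
      _ = (c * (c - a)) ^ 2 * energy a := by rw [mul_pow √_, sq_sqrt hpos.le]; ring
  have hca : 0 ≤ c - a := by linarith
  have hc0 : 0 < c := ha.trans hac
  have hb0 : 0 < b := hc0.trans hcb
  calc a ≤ c * (c - a) := le_of_sq_le_sq (le_of_mul_le_mul_right hsq hpos) (by positivity)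
    _ ≤ b * (b - a) := by gcongr

lemma exists_pairwise_le_abs_sub_J0_zeros :
    ∃ c > 0, {x | 0 < x ∧ J0 x = 0}.Pairwise fun x y => c ≤ |x - y| := by
  obtain ⟨r, hr, hne⟩ := exists_forall_Ioc_J0_ne_zero
  refine ⟨min (1 / 2) (r / 2), by positivity, ?_⟩
  have hgap {x y : ℝ} (hx : 0 < x ∧ J0 x = 0) (hy : 0 < y ∧ J0 y = 0) (hxy : x < y) :
      min (1 / 2) (r / 2) ≤ y - x := by
    by_contra! hlt
    have hhalf := hlt.trans_le (min_le_left _ _)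
    have hxr : r < x := lt_of_not_ge fun hle => hne x ⟨hx.1, hle⟩ hx.2
    nlinarith [le_mul_sub_of_J0_eq_zero hx.1 hxy hx.2 hy.2, hlt.trans_le (min_le_right _ _)]
  intro x hx y hy hxy
  rcases hxy.lt_or_gt with hlt | hlt
  · rw [abs_sub_comm, abs_of_pos (sub_pos.2 hlt)]
    exact hgap hx hy hlt
  · rw [abs_of_pos (sub_pos.2 hlt)]
    exact hgap hy hx hlt

end BesselODE

section BesselAsymptotics

open Real Set Filter Topology ComplexConjugate

/-- The integrand `exp (i x w) (1 - w²) ^ (-1/2)` of Poisson's integral, whose integral over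
`(-1, 1)` is `π * J0 x`. A single branch of the square root serves on `(-1, 1)` and on the open
upper half-plane, because `1 - w²` stays off the negative real axis there. -/
noncomputable def poissonIntegrand (x : ℝ) (w : ℂ) : ℂ :=
  Complex.exp (Complex.I * x * w) * (1 - w ^ 2) ^ ((-1 / 2 : ℝ) : ℂ)

lemma one_sub_sq_mem_slitPlane_of_im_pos {w : ℂ} (hw : 0 < w.im) :
    1 - w ^ 2 ∈ Complex.slitPlane := by
  rw [Complex.mem_slitPlane_iff]
  simp only [sq, Complex.sub_re, Complex.mul_re, Complex.one_re, Complex.sub_im, Complex.mul_im,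
    Complex.one_im]
  by_cases hre : w.re = 0
  · left; rw [hre]; nlinarith
  · right; ring_nf; exact neg_ne_zero.2 (by positivity)

lemma one_sub_sq_mem_slitPlane_of_mem_Ioo {t : ℝ} (ht : t ∈ Ioo (-1 : ℝ) 1) :
    1 - (t : ℂ) ^ 2 ∈ Complex.slitPlane := by
  rw [← Complex.ofReal_pow, ← Complex.ofReal_one, ← Complex.ofReal_sub,
    Complex.ofReal_mem_slitPlane]
  nlinarith [ht.1, ht.2]

lemma differentiableAt_poissonIntegrand (x : ℝ) {w : ℂ} (hw : 1 - w ^ 2 ∈ Complex.slitPlane) :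
    DifferentiableAt ℂ (poissonIntegrand x) w := by
  unfold poissonIntegrand
  exact DifferentiableAt.mul (by fun_prop) (DifferentiableAt.cpow_const (by fun_prop) hw)

lemma norm_poissonIntegrand (x : ℝ) (w : ℂ) :
    ‖poissonIntegrand x w‖ = exp (-(x * w.im)) * ‖1 - w ^ 2‖ ^ (-1 / 2 : ℝ) := by
  rw [poissonIntegrand, norm_mul, Complex.norm_cpow_real, Complex.norm_exp]
  simp

lemma norm_poissonIntegrand_le (x t : ℝ) {y r : ℝ} (hr : 0 < r) (hle : r ≤ 1 - t ^ 2 + y ^ 2) :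
    ‖poissonIntegrand x (t + y * Complex.I)‖ ≤ exp (-(x * y)) * r ^ (-1 / 2 : ℝ) := by
  have hnorm : r ≤ ‖1 - (t + y * Complex.I) ^ 2‖ := by
    refine (hle.trans_eq ?_).trans (Complex.re_le_norm _)
    simp [sq]
    ring
  have him : (t + y * Complex.I : ℂ).im = y := by simp
  rw [norm_poissonIntegrand, him]
  exact mul_le_mul_of_nonneg_left (rpow_le_rpow_of_nonpos hr hnorm (by norm_num)) (exp_pos _).le

lemma norm_poissonIntegrand_ofReal (x : ℝ) {t : ℝ} (ht : t ∈ Ioo (-1 : ℝ) 1) :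
    ‖poissonIntegrand x t‖ = (1 - t ^ 2) ^ (-1 / 2 : ℝ) := by
  have hpos : 0 ≤ 1 - t ^ 2 := by nlinarith [ht.1, ht.2]
  rw [norm_poissonIntegrand, Complex.ofReal_im, mul_zero, neg_zero, exp_zero, one_mul,
    ← Complex.ofReal_pow, ← Complex.ofReal_one, ← Complex.ofReal_sub, Complex.norm_of_nonneg hpos]

lemma poissonIntegrand_neg_conj (x : ℝ) {w : ℂ} (hw : 0 < w.im) :
    poissonIntegrand x (-conj w) = conj (poissonIntegrand x w) := by
  have harg := (Complex.mem_slitPlane_iff_arg.1 (one_sub_sq_mem_slitPlane_of_im_pos hw)).1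
  have hpow := Complex.conj_cpow _ ((-1 / 2 : ℝ) : ℂ) harg
  rw [Complex.conj_ofReal] at hpow
  rw [poissonIntegrand, poissonIntegrand, map_mul, ← hpow, ← Complex.exp_conj]
  simp only [map_sub, map_mul, map_one, map_pow, Complex.conj_I, Complex.conj_ofReal, neg_sq,
    neg_mul, mul_neg]

lemma continuousAt_poissonIntegrand_add_mul_I (x t : ℝ) {y : ℝ} (hy : 0 < y) :
    ContinuousAt (fun p : ℝ × ℝ => poissonIntegrand x (p.1 + p.2 * Complex.I)) (t, y) :=
  ContinuousAt.comp (g := poissonIntegrand x)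
    (f := fun p : ℝ × ℝ => (p.1 : ℂ) + p.2 * Complex.I)
    (differentiableAt_poissonIntegrand x
      (one_sub_sq_mem_slitPlane_of_im_pos (by simpa using hy))).continuousAt (by fun_prop)

lemma abs_cos_smul_poissonIntegrand_sin (x : ℝ) {θ : ℝ} (hθ : θ ∈ Ioo (-(π / 2)) (π / 2)) :
    |cos θ| • poissonIntegrand x (sin θ : ℝ) = Complex.exp (Complex.I * x * (sin θ : ℝ)) := by
  have hcos : 0 < cos θ := cos_pos_of_mem_Ioo hθ
  have hroot : (cos θ ^ 2) ^ (-1 / 2 : ℝ) = (cos θ)⁻¹ := by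
    rw [← rpow_natCast_mul hcos.le]
    norm_num [rpow_neg_one]
  rw [poissonIntegrand, ← Complex.ofReal_pow, ← Complex.ofReal_one, ← Complex.ofReal_sub,
    ← cos_sq', ← Complex.ofReal_cpow (sq_nonneg _), hroot, abs_of_pos hcos, Complex.real_smul,
    mul_left_comm, ← Complex.ofReal_mul, mul_inv_cancel₀ hcos.ne', Complex.ofReal_one, mul_one]

lemma integrableOn_poissonIntegrand (x : ℝ) :
    IntegrableOn (fun t : ℝ => poissonIntegrand x t) (Ioo (-1) 1) := by
  rw [← integrableOn_Icc_iff_integrableOn_Ioo, ← bijOn_sin.image_eq,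
    integrableOn_image_iff_integrableOn_abs_deriv_smul measurableSet_Icc
      (fun θ _ => (hasDerivAt_sin θ).hasDerivWithinAt) injOn_sin,
    integrableOn_Icc_iff_integrableOn_Ioo,
    integrableOn_congr_fun (fun θ hθ => abs_cos_smul_poissonIntegrand_sin x hθ) measurableSet_Ioo,
    ← integrableOn_Icc_iff_integrableOn_Ioo]
  exact (by fun_prop : Continuous _).integrableOn_Icc

lemma integral_poissonIntegrand_re (x : ℝ) :
    (∫ t in Ioo (-1 : ℝ) 1, poissonIntegrand x t).re = π * J0 x := by
  have hint : IntegrableOn (fun θ : ℝ => Complex.exp (Complex.I * x * (sin θ : ℝ)))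
      (Icc (-(π / 2)) (π / 2)) := (by fun_prop : Continuous _).integrableOn_Icc
  have hre (θ : ℝ) : (Complex.exp (Complex.I * x * (sin θ : ℝ))).re = cos (x * sin θ) := by
    rw [Complex.exp_re]
    simp [-Complex.ofReal_sin]
  have hper : Function.Periodic (fun θ => cos (x * sin θ)) π := fun θ => by simp [sin_add_pi]
  have hshift := hper.intervalIntegral_add_eq (-(π / 2)) 0
  rw [neg_add_eq_sub, sub_half, zero_add] at hshift
  rw [← integral_Icc_eq_integral_Ioo, ← bijOn_sin.image_eq,
    integral_image_eq_integral_abs_deriv_smul measurableSet_Icc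
      (fun θ _ => (hasDerivAt_sin θ).hasDerivWithinAt) injOn_sin, integral_Icc_eq_integral_Ioo,
    setIntegral_congr_fun measurableSet_Ioo
      (fun θ hθ => abs_cos_smul_poissonIntegrand_sin x hθ), ← integral_Icc_eq_integral_Ioo,
    ← RCLike.re_eq_complex_re, ← integral_re hint]
  simp_rw [RCLike.re_eq_complex_re, hre]
  rw [integral_Icc_eq_integral_Ioc, ← intervalIntegral.integral_of_le (by linarith [pi_pos]),
    hshift, J0_eq_integral, ← mul_assoc, mul_one_div_cancel pi_ne_zero, one_mul]

lemma integral_poissonIntegrand_rectangle (x : ℝ) {δ R : ℝ} (hδ : 0 < δ) (hR : δ ≤ R) :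
    (∫ t in (-1 : ℝ)..1, poissonIntegrand x (t + δ * Complex.I)) -
        (∫ t in (-1 : ℝ)..1, poissonIntegrand x (t + R * Complex.I)) =
      (2 * (∫ y in δ..R, poissonIntegrand x ((1 : ℝ) + y * Complex.I)).im : ℝ) := by
  have hdiff : DifferentiableOn ℂ (poissonIntegrand x) (uIcc (-1 : ℝ) 1 ×ℂ uIcc δ R) := by
    intro w hw
    have him : w.im ∈ Icc δ R := uIcc_of_le hR ▸ hw.2
    exact (differentiableAt_poissonIntegrand x (one_sub_sq_mem_slitPlane_of_im_pos
      (hδ.trans_le him.1))).differentiableWithinAt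
  have hrect := Complex.integral_boundary_rect_eq_zero_of_differentiableOn (poissonIntegrand x)
    ⟨-1, δ⟩ ⟨1, R⟩ hdiff
  have hleft : ∫ y in δ..R, poissonIntegrand x ((-1 : ℝ) + y * Complex.I) =
      conj (∫ y in δ..R, poissonIntegrand x ((1 : ℝ) + y * Complex.I)) := by
    rw [intervalIntegral.integral_of_le hR, intervalIntegral.integral_of_le hR, ← integral_conj]
    refine setIntegral_congr_fun measurableSet_Ioc fun y hy => ?_
    rw [← poissonIntegrand_neg_conj x (by simpa using hδ.trans hy.1)]
    congr 1
    simp only [Complex.ofReal_neg, Complex.ofReal_one, map_add, map_one, map_mul,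
      Complex.conj_ofReal, Complex.conj_I]
    ring
  simp only [hleft, smul_eq_mul] at hrect
  linear_combination hrect - Complex.I * Complex.sub_conj
    (∫ y in δ..R, poissonIntegrand x ((1 : ℝ) + y * Complex.I)) -
    ((2 * (∫ y in δ..R, poissonIntegrand x ((1 : ℝ) + y * Complex.I)).im : ℝ) : ℂ) * Complex.I_sq

lemma tendsto_integral_poissonIntegrand_atTop {x : ℝ} (hx : 0 < x) :
    Tendsto (fun R : ℝ => ∫ t in (-1 : ℝ)..1, poissonIntegrand x (t + R * Complex.I))
      atTop (𝓝 0) := by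
  have hexp : Tendsto (fun R => exp (-(x * R)) * |1 - (-1)|) atTop (𝓝 0) := by
    simpa using (tendsto_exp_neg_atTop_nhds_zero.comp
      (tendsto_id.const_mul_atTop hx)).mul_const |(1 : ℝ) - (-1)|
  refine squeeze_zero_norm' ?_ hexp
  filter_upwards [eventually_ge_atTop 1] with R hR
  refine intervalIntegral.norm_integral_le_of_norm_le_const fun t ht => ?_
  rw [uIoc_of_le (by norm_num)] at ht
  simpa using norm_poissonIntegrand_le x t one_pos
    (show 1 ≤ 1 - t ^ 2 + R ^ 2 by nlinarith [ht.1, ht.2])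

lemma tendsto_integral_poissonIntegrand_nhdsGT_zero {x : ℝ} (hx : 0 < x) :
    Tendsto (fun δ : ℝ => ∫ t in Ioo (-1 : ℝ) 1, poissonIntegrand x (t + δ * Complex.I))
      (𝓝[>] 0) (𝓝 (∫ t in Ioo (-1 : ℝ) 1, poissonIntegrand x t)) := by
  refine tendsto_integral_filter_of_dominated_convergence
    (fun t => (1 - t ^ 2) ^ (-1 / 2 : ℝ)) ?_ ?_ ?_ ?_
  · filter_upwards [self_mem_nhdsWithin] with δ hδ
    exact ContinuousOn.aestronglyMeasurable (fun t _ =>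
      ((continuousAt_poissonIntegrand_add_mul_I x t hδ).comp₂
        continuousAt_id continuousAt_const).continuousWithinAt) measurableSet_Ioo
  · filter_upwards [self_mem_nhdsWithin] with δ hδ
    filter_upwards [ae_restrict_mem measurableSet_Ioo] with t ht
    have hpos : 0 < 1 - t ^ 2 := by nlinarith [ht.1, ht.2]
    refine (norm_poissonIntegrand_le x t hpos (by nlinarith)).trans
      (mul_le_of_le_one_left (by positivity) (exp_le_one_iff.2 ?_))
    exact neg_nonpos.2 (mul_pos hx hδ).le
  · exact IntegrableOn.congr_fun (integrableOn_poissonIntegrand x).norm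
      (fun t ht => norm_poissonIntegrand_ofReal x ht) measurableSet_Ioo
  · filter_upwards [ae_restrict_mem measurableSet_Ioo] with t ht
    have hline : Tendsto (fun δ : ℝ => (t : ℂ) + δ * Complex.I) (𝓝[>] 0) (𝓝 t) := by
      have hcont : Continuous fun δ : ℝ => (t : ℂ) + δ * Complex.I := by fun_prop
      simpa using (hcont.tendsto 0).mono_left nhdsWithin_le_nhds
    exact (differentiableAt_poissonIntegrand x
      (one_sub_sq_mem_slitPlane_of_mem_Ioo ht)).continuousAt.tendsto.comp hline

lemma integrableOn_rpow_mul_exp_neg_mul {s x : ℝ} (hs : -1 < s) (hx : 0 < x) :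
    IntegrableOn (fun y => y ^ s * exp (-(x * y))) (Ioi 0) := by
  simpa using integrableOn_rpow_mul_exp_neg_mul_rpow hs one_pos hx

lemma mem_slitPlane_of_im_le_neg_one {w : ℂ} (hw : w.im ≤ -1) : w ∈ Complex.slitPlane :=
  Complex.mem_slitPlane_iff.2 (Or.inr (by linarith))

lemma one_le_norm_of_im_le_neg_one {w : ℂ} (hw : w.im ≤ -1) : 1 ≤ ‖w‖ :=
  le_trans (by linarith) ((neg_le_abs _).trans (Complex.abs_im_le_norm w))

lemma norm_cpow_neg_half_sub_le {v w : ℂ} (hv : v.im ≤ -1) (hw : w.im ≤ -1) :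
    ‖v ^ ((-1 / 2 : ℝ) : ℂ) - w ^ ((-1 / 2 : ℝ) : ℂ)‖ ≤ ‖v - w‖ := by
  have hderiv (u : ℂ) (hu : u.im ≤ -1) : HasDerivWithinAt (fun u : ℂ => u ^ ((-1 / 2 : ℝ) : ℂ))
      (((-1 / 2 : ℝ) : ℂ) * u ^ (((-1 / 2 : ℝ) : ℂ) - 1) * 1) {u | u.im ≤ -1} u :=
    ((hasDerivAt_id u).cpow_const (mem_slitPlane_of_im_le_neg_one hu)).hasDerivWithinAt
  have hbound (u : ℂ) (hu : u.im ≤ -1) :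
      ‖((-1 / 2 : ℝ) : ℂ) * u ^ (((-1 / 2 : ℝ) : ℂ) - 1) * 1‖ ≤ 1 := by
    rw [mul_one, norm_mul, ← Complex.ofReal_one, ← Complex.ofReal_sub, Complex.norm_cpow_real]
    exact mul_le_one₀ (by norm_num) (by positivity)
      (rpow_le_one_of_one_le_of_nonpos (one_le_norm_of_im_le_neg_one hu) (by norm_num))
  simpa using (convex_halfSpace_im_le (-1)).norm_image_sub_le_of_norm_hasDerivWithin_le
    hderiv hbound hw hv

lemma poissonIntegrand_one_add_mul_I (x : ℝ) {y : ℝ} (hy : 0 < y) :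
    poissonIntegrand x ((1 : ℝ) + y * Complex.I) = Complex.exp (x * Complex.I) *
      ((y ^ (-1 / 2 : ℝ) * exp (-(x * y)) : ℝ) *
        (y - 2 * Complex.I) ^ ((-1 / 2 : ℝ) : ℂ)) := by
  have him : (y - 2 * Complex.I).im ≤ -1 := by norm_num
  have hne : y - 2 * Complex.I ≠ 0 :=
    Complex.slitPlane_ne_zero (mem_slitPlane_of_im_le_neg_one him)
  have hsq : 1 - (((1 : ℝ) : ℂ) + y * Complex.I) ^ 2 = y * (y - 2 * Complex.I) := by
    push_cast
    linear_combination -(y : ℂ) ^ 2 * Complex.I_sq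
  have hpow : (y * (y - 2 * Complex.I)) ^ ((-1 / 2 : ℝ) : ℂ) =
      (y ^ (-1 / 2 : ℝ) : ℝ) * (y - 2 * Complex.I) ^ ((-1 / 2 : ℝ) : ℂ) := by
    rw [Complex.cpow_def_of_ne_zero (mul_ne_zero (by simpa using hy.ne') hne),
      Complex.log_ofReal_mul hy hne, add_mul, Complex.exp_add, Complex.cpow_def_of_ne_zero hne,
      rpow_def_of_pos hy, Complex.ofReal_exp, Complex.ofReal_mul]
  have hexp : Complex.exp (Complex.I * x * (((1 : ℝ) : ℂ) + y * Complex.I)) =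
      Complex.exp (x * Complex.I) * (exp (-(x * y)) : ℝ) := by
    rw [Complex.ofReal_exp, ← Complex.exp_add]
    congr 1
    push_cast
    linear_combination (x : ℂ) * y * Complex.I_sq
  rw [poissonIntegrand, hsq, hpow, hexp]
  push_cast
  ring

lemma integrableOn_mul_cpow_sub_two_mul_I {k : ℝ → ℝ} (hk : IntegrableOn k (Ioi 0)) :
    IntegrableOn (fun y : ℝ => (k y : ℂ) * (y - 2 * Complex.I) ^ ((-1 / 2 : ℝ) : ℂ)) (Ioi 0) := by
  have him (y : ℝ) : (y - 2 * Complex.I).im ≤ -1 := by norm_num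
  have hcont : Continuous fun y : ℝ => (y - 2 * Complex.I) ^ ((-1 / 2 : ℝ) : ℂ) :=
    Continuous.cpow (by fun_prop) continuous_const fun y => mem_slitPlane_of_im_le_neg_one (him y)
  refine Integrable.mul_bdd (c := 1) hk.ofReal hcont.aestronglyMeasurable (.of_forall fun y => ?_)
  rw [Complex.norm_cpow_real]
  exact rpow_le_one_of_one_le_of_nonpos (one_le_norm_of_im_le_neg_one (him y)) (by norm_num)

lemma integrableOn_poissonIntegrand_one_add_mul_I {x : ℝ} (hx : 0 < x) :
    IntegrableOn (fun y : ℝ => poissonIntegrand x ((1 : ℝ) + y * Complex.I)) (Ioi 0) :=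
  IntegrableOn.congr_fun ((integrableOn_mul_cpow_sub_two_mul_I
      (integrableOn_rpow_mul_exp_neg_mul (by norm_num) hx)).const_mul _)
    (fun _ hy => (poissonIntegrand_one_add_mul_I x hy).symm) measurableSet_Ioi

lemma integral_poissonIntegrand_add_mul_I {x δ : ℝ} (hx : 0 < x) (hδ : 0 < δ) :
    ∫ t in (-1 : ℝ)..1, poissonIntegrand x (t + δ * Complex.I) =
      (2 * (∫ y in Ioi δ, poissonIntegrand x ((1 : ℝ) + y * Complex.I)).im : ℝ) := by
  have hright := (intervalIntegral_tendsto_integral_Ioi δ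
    ((integrableOn_poissonIntegrand_one_add_mul_I hx).mono_set (Ioi_subset_Ioi hδ.le)) tendsto_id)
  have hcont : Continuous fun w : ℂ => ((2 * w.im : ℝ) : ℂ) := by fun_prop
  have hrect := (hcont.tendsto _).comp hright
  refine tendsto_nhds_unique ?_ hrect
  refine (sub_zero (∫ t in (-1 : ℝ)..1, poissonIntegrand x (t + δ * Complex.I)) ▸
    tendsto_const_nhds.sub (tendsto_integral_poissonIntegrand_atTop hx)).congr' ?_
  filter_upwards [eventually_ge_atTop δ] with R hR
  exact integral_poissonIntegrand_rectangle x hδ hR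

/-- Cauchy's theorem moves the path of Poisson's integral from `(-1, 1)` to the two vertical
half-lines above `-1` and `1`, whose contributions are mirror images. -/
lemma pi_mul_J0_eq_im_integral {x : ℝ} (hx : 0 < x) :
    π * J0 x = 2 * (∫ y in Ioi (0 : ℝ), poissonIntegrand x ((1 : ℝ) + y * Complex.I)).im := by
  have hcover : AECover (volume.restrict (Ioi (0 : ℝ))) (𝓝[>] 0) fun δ => Ioi δ :=
    aecover_Ioi_of_Ioi nhdsWithin_le_nhds
  have hcont : Continuous fun w : ℂ => 2 * w.im := by fun_prop
  have hright := (hcont.tendsto _).comp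
    (hcover.integral_tendsto_of_countably_generated
      (integrableOn_poissonIntegrand_one_add_mul_I hx))
  have hbottom := (Complex.continuous_re.tendsto _).comp
    (tendsto_integral_poissonIntegrand_nhdsGT_zero hx)
  rw [integral_poissonIntegrand_re] at hbottom
  refine tendsto_nhds_unique hbottom (hright.congr' ?_)
  filter_upwards [self_mem_nhdsWithin] with δ hδ
  rw [Function.comp_apply, Function.comp_apply, ← integral_Ioc_eq_integral_Ioo,
    ← intervalIntegral.integral_of_le (by norm_num), integral_poissonIntegrand_add_mul_I hx hδ,
    Complex.ofReal_re, Measure.restrict_restrict measurableSet_Ioi,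
    inter_eq_self_of_subset_left (Ioi_subset_Ioi (le_of_lt hδ))]

lemma integral_rpow_neg_half_mul_exp_neg_mul {x : ℝ} (hx : 0 < x) :
    ∫ y in Ioi 0, y ^ (-1 / 2 : ℝ) * exp (-(x * y)) = √(π / x) := by
  have h := integral_rpow_mul_exp_neg_mul_Ioi (a := 1 / 2) one_half_pos hx
  rw [← sqrt_eq_rpow, Gamma_one_half_eq, ← sqrt_mul (by positivity), one_div_mul_eq_div] at h
  convert h using 5
  norm_num

lemma integral_mul_rpow_neg_half_mul_exp_neg_mul {x : ℝ} (hx : 0 < x) :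
    ∫ y in Ioi 0, y * (y ^ (-1 / 2 : ℝ) * exp (-(x * y))) = √(π / x) / (2 * x) := by
  have hGamma : Gamma (3 / 2) = 1 / 2 * √π := by
    rw [← Gamma_one_half_eq, ← Gamma_add_one one_half_pos.ne']; norm_num
  have hpow : (1 / x) ^ (3 / 2 : ℝ) = 1 / x * √(1 / x) := by
    rw [sqrt_eq_rpow, ← rpow_one_add' (by positivity) (by norm_num)]; norm_num
  have h := integral_rpow_mul_exp_neg_mul_Ioi (a := 3 / 2) (by norm_num) hx
  rw [hGamma, hpow] at h
  have hrhs : √(π / x) / (2 * x) = 1 / x * √(1 / x) * (1 / 2 * √π) := by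
    rw [← one_div_mul_eq_div x π, sqrt_mul (by positivity)]
    field_simp
  rw [hrhs, ← h]
  refine setIntegral_congr_fun measurableSet_Ioi fun y (hy : 0 < y) => ?_
  rw [← mul_assoc, ← rpow_one_add' hy.le (by norm_num)]
  norm_num

lemma neg_two_mul_I_cpow_neg_half :
    (((0 : ℝ) : ℂ) - 2 * Complex.I) ^ ((-1 / 2 : ℝ) : ℂ) =
      (√2)⁻¹ * Complex.exp ((π / 4 : ℝ) * Complex.I) := by
  have hlog : Complex.log ((2 : ℝ) * -Complex.I) = Real.log 2 + -(π / 2) * Complex.I := by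
    rw [Complex.log_ofReal_mul two_pos (by simp), Complex.log_neg_I, neg_mul]
  rw [show ((0 : ℝ) : ℂ) - 2 * Complex.I = (2 : ℝ) * -Complex.I by push_cast; ring,
    Complex.cpow_def_of_ne_zero (by simp), hlog, add_mul, Complex.exp_add]
  congr 1
  · rw [← Complex.ofReal_mul, ← Complex.ofReal_exp, ← rpow_def_of_pos two_pos, sqrt_eq_rpow,
      ← rpow_neg two_pos.le]
    norm_num
  · congr 1
    push_cast
    ring

lemma norm_integral_mul_cpow_sub_le {k : ℝ → ℝ} (hk : IntegrableOn k (Ioi 0))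
    (hyk : IntegrableOn (fun y => y * k y) (Ioi 0)) (hk0 : ∀ y > 0, 0 ≤ k y) :
    ‖(∫ y in Ioi (0 : ℝ), (k y : ℂ) * (y - 2 * Complex.I) ^ ((-1 / 2 : ℝ) : ℂ)) -
        (∫ y in Ioi (0 : ℝ), k y : ℝ) * (((0 : ℝ) : ℂ) - 2 * Complex.I) ^ ((-1 / 2 : ℝ) : ℂ)‖ ≤
      ∫ y in Ioi (0 : ℝ), y * k y := by
  have hconst : IntegrableOn (fun y => (k y : ℂ) *
      (((0 : ℝ) : ℂ) - 2 * Complex.I) ^ ((-1 / 2 : ℝ) : ℂ)) (Ioi 0) := hk.ofReal.mul_const _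
  rw [← integral_complex_ofReal, ← integral_mul_const,
    ← integral_sub (integrableOn_mul_cpow_sub_two_mul_I hk) hconst]
  refine norm_integral_le_of_norm_le hyk ?_
  filter_upwards [ae_restrict_mem measurableSet_Ioi] with y (hy : 0 < y)
  have hdiff := norm_cpow_neg_half_sub_le (v := y - 2 * Complex.I)
    (w := ((0 : ℝ) : ℂ) - 2 * Complex.I) (by norm_num) (by norm_num)
  rw [sub_sub_sub_cancel_right, ← Complex.ofReal_sub, sub_zero, Complex.norm_of_nonneg hy.le]
    at hdiff
  rw [← mul_sub, norm_mul, Complex.norm_of_nonneg (hk0 y hy), mul_comm]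
  exact mul_le_mul_of_nonneg_right hdiff (hk0 y hy)

lemma norm_integral_poissonIntegrand_sub_le {x : ℝ} (hx : 0 < x) :
    ‖(∫ y in Ioi (0 : ℝ), poissonIntegrand x ((1 : ℝ) + y * Complex.I)) -
        (√(π / x) * (√2)⁻¹ : ℝ) * Complex.exp ((x + π / 4 : ℝ) * Complex.I)‖ ≤
      √(π / x) / (2 * x) := by
  have hint : IntegrableOn (fun y => y * (y ^ (-1 / 2 : ℝ) * exp (-(x * y)))) (Ioi 0) := by
    refine (integrableOn_rpow_mul_exp_neg_mul (s := 1 / 2) (by norm_num) hx).congr_fun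
      (fun y (hy : 0 < y) => ?_) measurableSet_Ioi
    rw [← mul_assoc, ← rpow_one_add' hy.le (by norm_num)]
    norm_num
  have hle := norm_integral_mul_cpow_sub_le (integrableOn_rpow_mul_exp_neg_mul (by norm_num) hx)
    hint fun y hy => by positivity
  rw [integral_rpow_neg_half_mul_exp_neg_mul hx, integral_mul_rpow_neg_half_mul_exp_neg_mul hx,
    neg_two_mul_I_cpow_neg_half] at hle
  have hmain : (√(π / x) * (√2)⁻¹ : ℝ) * Complex.exp ((x + π / 4 : ℝ) * Complex.I) =
      Complex.exp (x * Complex.I) *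
        (√(π / x) * ((√2)⁻¹ * Complex.exp ((π / 4 : ℝ) * Complex.I))) := by
    rw [Complex.ofReal_add, add_mul, Complex.exp_add]
    push_cast
    ring
  rwa [hmain, setIntegral_congr_fun measurableSet_Ioi
      (fun y hy => poissonIntegrand_one_add_mul_I x hy), integral_const_mul, ← mul_sub,
    norm_mul, Complex.norm_exp_ofReal_mul_I, one_mul]

lemma sin_add_pi_div_four_eq_cos (x : ℝ) : sin (x + π / 4) = cos (x - π / 4) := by
  rw [← cos_pi_div_two_sub, ← cos_neg]
  congr 1
  ring

theorem abs_J0_sub_cos_le {x : ℝ} (hx : 0 < x) :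
    |J0 x - √(2 / (π * x)) * cos (x - π / 4)| ≤ 1 / (x * √(π * x)) := by
  have hcoeff : √(2 / (π * x)) = 2 / π * (√(π / x) * (√2)⁻¹) := by
    rw [sqrt_div two_pos.le, sqrt_div pi_pos.le, sqrt_mul pi_pos.le]
    field_simp
    rw [sq_sqrt pi_pos.le, sq_sqrt two_pos.le, mul_comm]
  have herror : 1 / (x * √(π * x)) = 2 / π * (√(π / x) / (2 * x)) := by
    rw [sqrt_div pi_pos.le, sqrt_mul pi_pos.le]
    field_simp
    rw [sq_sqrt pi_pos.le]
  have him := (Complex.abs_im_le_norm _).trans (norm_integral_poissonIntegrand_sub_le hx)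
  rw [Complex.sub_im, Complex.im_ofReal_mul, Complex.exp_ofReal_mul_I_im] at him
  have hJ : J0 x = 2 / π *
      (∫ y in Ioi (0 : ℝ), poissonIntegrand x ((1 : ℝ) + y * Complex.I)).im := by
    rw [div_mul_eq_mul_div, ← pi_mul_J0_eq_im_integral hx, mul_div_cancel_left₀ _ pi_ne_zero]
  rw [hJ, ← sin_add_pi_div_four_eq_cos, hcoeff, herror, mul_assoc (2 / π), ← mul_sub, abs_mul,
    abs_of_pos (div_pos two_pos pi_pos)]
  gcongr

lemma exists_int_abs_sub_mul_pi_le (y : ℝ) :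
    ∃ k : ℤ, |y - k * π| ≤ π / 2 ∧ |y - k * π| ≤ π / 2 * |sin y| := by
  have hround : |y - round (y / π) * π| ≤ π / 2 := by
    rw [show y - round (y / π) * π = (y / π - round (y / π)) * π by field_simp, abs_mul,
      abs_of_pos pi_pos]
    nlinarith [abs_sub_round (y / π), pi_pos]
  refine ⟨round (y / π), hround, ?_⟩
  have hsin := mul_abs_le_abs_sin hround
  rw [sin_sub_int_mul_pi, abs_mul, abs_zpow, abs_neg, abs_one, one_zpow, one_mul] at hsin
  calc |y - round (y / π) * π| = π / 2 * (2 / π * |y - round (y / π) * π|) := by field_simp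
    _ ≤ π / 2 * |sin y| := by gcongr

lemma abs_cos_sub_pi_div_four_le_of_J0_eq_zero {x : ℝ} (hx : 0 < x) (h0 : J0 x = 0) :
    |cos (x - π / 4)| ≤ 1 / x := by
  have hle := abs_J0_sub_cos_le hx
  rw [h0, zero_sub, abs_neg, abs_mul, abs_of_nonneg (sqrt_nonneg _), sqrt_div two_pos.le,
    div_mul_eq_mul_div, ← div_div, div_le_div_iff_of_pos_right (by positivity)] at hle
  exact (le_mul_of_one_le_left (abs_nonneg _) (one_le_sqrt.2 one_le_two)).trans hle

lemma exists_int_abs_sq_sub_le_of_J0_eq_zero {x : ℝ} (hx : 0 < x) (h0 : J0 x = 0) :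
    ∃ m : ℤ, |x ^ 2 - π ^ 2 / 16 * (m : ℝ) ^ 2| ≤ π + (π / 2) ^ 2 := by
  obtain ⟨k, hk, hksin⟩ := exists_int_abs_sub_mul_pi_le (x + π / 4)
  rw [sin_add_pi_div_four_eq_cos] at hksin
  set d := x + π / 4 - k * π with hd
  have hdx : |d * x| ≤ π / 2 := by
    rw [abs_mul, abs_of_pos hx, ← le_div_iff₀ hx]
    calc |d| ≤ π / 2 * |cos (x - π / 4)| := hksin
      _ ≤ π / 2 * (1 / x) := by gcongr; exact abs_cos_sub_pi_div_four_le_of_J0_eq_zero hx h0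
      _ = π / 2 / x := by ring
  refine ⟨4 * k - 1, ?_⟩
  calc |x ^ 2 - π ^ 2 / 16 * ((4 * k - 1 : ℤ) : ℝ) ^ 2| = |2 * (d * x) - d ^ 2| := by
        rw [hd]; push_cast; congr 1; ring
    _ ≤ |2 * (d * x)| + |d ^ 2| := abs_sub _ _
    _ = 2 * |d * x| + |d| ^ 2 := by rw [abs_mul, abs_two, abs_pow]
    _ ≤ 2 * (π / 2) + (π / 2) ^ 2 := by gcongr
    _ = π + (π / 2) ^ 2 := by ring

end BesselAsymptotics

section DivisorBound

open Real

theorem le_pow_of_submultiplicative {f : ℕ → ℝ} {M : ℝ} {P : ℕ} (hf : ∀ n, 0 ≤ f n) (hM : 1 ≤ M)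
    (hmul : ∀ a b, a.Coprime b → f (a * b) ≤ f a * f b)
    (hpow : ∀ p e, p.Prime → 0 < e → f (p ^ e) ≤ M)
    (hlarge : ∀ p e, p.Prime → 0 < e → P ≤ p → f (p ^ e) ≤ 1) {n : ℕ} (hn : 1 < n) :
    f n ≤ M ^ P := by
  suffices h : f n ≤ M ^ (n.primeFactors ∩ Finset.range P).card by
    refine h.trans (pow_le_pow_right₀ hM ?_)
    exact (Finset.card_le_card Finset.inter_subset_right).trans_eq (Finset.card_range P)
  induction n using Nat.recOnPosPrimePosCoprime with
  | zero => omega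
  | one => omega
  | prime_pow p e hp he =>
    rw [Nat.primeFactors_prime_pow he.ne' hp]
    by_cases hpP : p < P
    · simpa [Finset.singleton_inter_of_mem (Finset.mem_range.2 hpP)] using hpow p e hp he
    · simpa [Finset.singleton_inter_of_notMem (mt Finset.mem_range.1 hpP)] using
        hlarge p e hp he (not_lt.1 hpP)
  | coprime a b ha hb hab iha ihb =>
    have hdisj : Disjoint (a.primeFactors ∩ Finset.range P) (b.primeFactors ∩ Finset.range P) :=
      hab.disjoint_primeFactors.mono Finset.inter_subset_left Finset.inter_subset_left
    rw [hab.primeFactors_mul, Finset.union_inter_distrib_right, Finset.card_union_of_disjoint hdisj,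
      pow_add]
    exact (hmul a b hab).trans (mul_le_mul (iha ha) (ihb hb) (hf b) (by positivity))

theorem exists_mul_succ_sq_le_mul_pow_rpow {K ε : ℝ} (hK : 1 ≤ K) (hε : 0 < ε) :
    ∃ M : ℝ, 1 ≤ M ∧ ∀ (x : ℝ) (e : ℕ), 2 ≤ x → K * ((e : ℝ) + 1) ^ 2 ≤ M * (x ^ e) ^ ε := by
  have hr : 1 < (2 : ℝ) ^ ε := one_lt_rpow one_lt_two hε
  have hlim := tendsto_pow_const_mul_const_pow_of_abs_lt_one (r := ((2 : ℝ) ^ ε)⁻¹) 2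
    (by rw [abs_of_pos (by positivity)]; exact inv_lt_one_of_one_lt₀ hr)
  obtain ⟨B, hB⟩ := hlim.bddAbove_range
  have hsq (e : ℕ) : ((e : ℝ) + 1) ^ 2 ≤ B * ((2 : ℝ) ^ ε) ^ (e + 1) := by
    have h := hB (Set.mem_range_self (e + 1))
    rw [inv_pow, ← div_eq_mul_inv, div_le_iff₀ (by positivity)] at h
    exact_mod_cast h
  have hB0 : 0 ≤ B := by
    have h := (sq_nonneg _).trans (hsq 0)
    exact nonneg_of_mul_nonneg_left h (by positivity)
  have hM (x : ℝ) (e : ℕ) (hx : 2 ≤ x) :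
      K * ((e : ℝ) + 1) ^ 2 ≤ K * (B * 2 ^ ε) * (x ^ e) ^ ε := by
    calc K * ((e : ℝ) + 1) ^ 2 ≤ K * (B * ((2 : ℝ) ^ ε) ^ (e + 1)) := by gcongr; exact hsq e
      _ = K * (B * 2 ^ ε) * ((2 : ℝ) ^ ε) ^ e := by ring
      _ ≤ K * (B * 2 ^ ε) * (x ^ ε) ^ e := by gcongr
      _ = K * (B * 2 ^ ε) * (x ^ e) ^ ε := by rw [rpow_pow_comm (by positivity)]
  exact ⟨K * (B * 2 ^ ε), hK.trans (by simpa using hM 2 0 le_rfl), hM⟩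

theorem mul_succ_sq_le_pow_rpow {K ε x : ℝ} (hK : 1 ≤ K) (hε : 0 < ε) (hx : (4 * K) ^ ε⁻¹ ≤ x)
    {e : ℕ} (he : e ≠ 0) : K * ((e : ℝ) + 1) ^ 2 ≤ (x ^ e) ^ ε := by
  have hx0 : 0 ≤ x := le_trans (by positivity) hx
  have h4K : 4 * K ≤ x ^ ε := (rpow_inv_le_iff_of_pos (by positivity) hx0 hε).1 hx
  have h2e : (e : ℝ) + 1 ≤ 2 ^ e := by exact_mod_cast Nat.lt_two_pow_self
  calc K * ((e : ℝ) + 1) ^ 2 ≤ K ^ e * (2 ^ e) ^ 2 := by gcongr; exact le_self_pow₀ hK he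
    _ = (4 * K) ^ e := by rw [mul_pow, ← pow_mul, mul_comm e, pow_mul, mul_comm]; norm_num
    _ ≤ (x ^ ε) ^ e := by gcongr
    _ = (x ^ e) ^ ε := rpow_pow_comm hx0 ε e

theorem exists_le_mul_rpow_of_submultiplicative {f : ℕ → ℝ} {K ε : ℝ} (hf : ∀ n, 0 ≤ f n)
    (hK : 1 ≤ K) (hmul : ∀ a b, a.Coprime b → f (a * b) ≤ f a * f b)
    (hpow : ∀ p e : ℕ, p.Prime → f (p ^ e) ≤ K * ((e : ℝ) + 1) ^ 2) (hε : 0 < ε) :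
    ∃ C : ℝ, 0 < C ∧ ∀ n, 1 < n → f n ≤ C * (n : ℝ) ^ ε := by
  obtain ⟨M, hM, hsmall⟩ := exists_mul_succ_sq_le_mul_pow_rpow hK hε
  obtain ⟨P, hP⟩ := exists_nat_ge ((4 * K) ^ ε⁻¹)
  have hpos {n : ℕ} (hn : 0 < n) : (0 : ℝ) < (n : ℝ) ^ ε := by positivity
  refine ⟨M ^ P, by positivity, fun n hn => ?_⟩
  rw [← div_le_iff₀ (hpos (by omega))]
  refine le_pow_of_submultiplicative (f := fun n => f n / (n : ℝ) ^ ε)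
    (fun n => div_nonneg (hf n) (by positivity)) hM (fun a b hab => ?_) (fun p e hp _ => ?_)
    (fun p e hp he hPp => ?_) hn
  · rw [Nat.cast_mul, mul_rpow (Nat.cast_nonneg a) (Nat.cast_nonneg b), div_mul_div_comm]
    gcongr
    exact hmul a b hab
  · rw [div_le_iff₀ (hpos (pow_pos hp.pos e)), Nat.cast_pow]
    exact (hpow p e hp).trans (hsmall p e (by exact_mod_cast hp.two_le))
  · rw [div_le_one (hpos (pow_pos hp.pos e)), Nat.cast_pow]
    exact (hpow p e hp).trans
      (mul_succ_sq_le_pow_rpow hK hε (hP.trans (Nat.cast_le.2 hPp)) he.ne')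

end DivisorBound

section GaussianIntegers

/-- The Gaussian integers of norm `n`; their number is `r₂(n)`, the number of representations of
`n` as a sum of two squares. -/
def gaussianNormFiber (n : ℕ) : Set GaussianInt := {x | x.norm.natAbs = n}

theorem natAbs_norm_eq_sq_add_sq (x : GaussianInt) :
    (x.norm.natAbs : ℤ) = x.re ^ 2 + x.im ^ 2 := by
  rw [GaussianInt.abs_natCast_norm, Zsqrtd.norm_def]
  ring

theorem finite_gaussianNormFiber (n : ℕ) : (gaussianNormFiber n).Finite := by
  refine (((Set.finite_Icc (-n : ℤ) n).prod (Set.finite_Icc (-n : ℤ) n)).image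
    fun p => (⟨p.1, p.2⟩ : GaussianInt)).subset fun x hx => ?_
  have hn : (n : ℤ) = x.re ^ 2 + x.im ^ 2 := by rw [← hx, natAbs_norm_eq_sq_add_sq]
  have hre : |x.re| ≤ n := by
    nlinarith [Int.le_self_sq |x.re|, sq_abs x.re, sq_nonneg x.im]
  have him : |x.im| ≤ n := by
    nlinarith [Int.le_self_sq |x.im|, sq_abs x.im, sq_nonneg x.re]
  exact ⟨(x.re, x.im), ⟨abs_le.1 hre, abs_le.1 him⟩, rfl⟩

theorem dvd_natAbs_norm (x : GaussianInt) : x ∣ (x.norm.natAbs : GaussianInt) :=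
  ⟨star x, by rw [GaussianInt.natCast_natAbs_norm, Zsqrtd.norm_eq_mul_conj]⟩

theorem natAbs_norm_mul (x y : GaussianInt) :
    (x * y).norm.natAbs = x.norm.natAbs * y.norm.natAbs := by
  rw [Zsqrtd.norm_mul, Int.natAbs_mul]

theorem natAbs_norm_natCast (n : ℕ) : (n : GaussianInt).norm.natAbs = n ^ 2 := by
  rw [Zsqrtd.norm_natCast, Int.natAbs_mul, Int.natAbs_natCast, sq]

theorem natAbs_norm_dvd_sq_of_dvd {x : GaussianInt} {n : ℕ} (h : x ∣ (n : GaussianInt)) :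
    x.norm.natAbs ∣ n ^ 2 := by
  obtain ⟨y, hy⟩ := h
  exact ⟨y.norm.natAbs, by rw [← natAbs_norm_natCast, hy, natAbs_norm_mul]⟩

theorem gaussianNormFiber_mul_subset {a b : ℕ} (hab : a.Coprime b) :
    gaussianNormFiber (a * b) ⊆
      (fun p : GaussianInt × GaussianInt => p.1 * p.2) ''
        (gaussianNormFiber a ×ˢ gaussianNormFiber b) := by
  intro x hx
  have hdvd : x ∣ (a : GaussianInt) * b := by
    simpa [show x.norm.natAbs = a * b from hx] using dvd_natAbs_norm x
  obtain ⟨y, w, hy, hw, rfl⟩ := exists_dvd_and_dvd_of_dvd_mul hdvd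
  have hnorm : y.norm.natAbs * w.norm.natAbs = a * b := by rw [← natAbs_norm_mul]; exact hx
  have hyb : y.norm.natAbs.Coprime b :=
    (hab.pow_left 2).coprime_dvd_left (natAbs_norm_dvd_sq_of_dvd hy)
  have hwa : w.norm.natAbs.Coprime a :=
    (hab.symm.pow_left 2).coprime_dvd_left (natAbs_norm_dvd_sq_of_dvd hw)
  have hya : y.norm.natAbs = a :=
    Nat.dvd_antisymm (hyb.dvd_of_dvd_mul_right (Dvd.intro _ hnorm))
      (hwa.symm.dvd_of_dvd_mul_right (Dvd.intro _ hnorm.symm))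
  have hwb : w.norm.natAbs = b :=
    Nat.dvd_antisymm (hwa.dvd_of_dvd_mul_left (Dvd.intro_left _ hnorm))
      (hyb.symm.dvd_of_dvd_mul_left (Dvd.intro_left _ hnorm.symm))
  exact ⟨(y, w), ⟨hya, hwb⟩, rfl⟩

theorem ncard_gaussianNormFiber_mul_le {a b : ℕ} (hab : a.Coprime b) :
    (gaussianNormFiber (a * b)).ncard ≤
      (gaussianNormFiber a).ncard * (gaussianNormFiber b).ncard := by
  have hfin := (finite_gaussianNormFiber a).prod (finite_gaussianNormFiber b)
  rw [← Set.ncard_prod]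
  exact (Set.ncard_le_ncard (gaussianNormFiber_mul_subset hab) (hfin.image _)).trans
    (Set.ncard_image_le hfin)

theorem prime_of_prime_natAbs_norm {x : GaussianInt} (h : x.norm.natAbs.Prime) : Prime x := by
  refine irreducible_iff_prime.1 ⟨fun hx => ?_, fun y w hyw => ?_⟩
  · exact h.ne_one (Zsqrtd.norm_eq_one_iff.2 hx)
  · rw [hyw, natAbs_norm_mul, Nat.prime_mul_iff] at h
    rw [← Zsqrtd.norm_eq_one_iff, ← Zsqrtd.norm_eq_one_iff]
    tauto

theorem exists_natCast_prime_eq_mul {p : ℕ} (hp : p.Prime) :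
    ∃ q r : GaussianInt, (p : GaussianInt) = q * r ∧ (Prime q ∨ q = 1) ∧ (Prime r ∨ r = 1) := by
  by_cases hirr : Irreducible (p : GaussianInt)
  · exact ⟨p, 1, (mul_one _).symm, Or.inl (irreducible_iff_prime.1 hirr), Or.inr rfl⟩
  have hunit : ¬ IsUnit (p : GaussianInt) := by
    rw [← Zsqrtd.norm_eq_one_iff, natAbs_norm_natCast]
    exact (Nat.one_lt_pow two_ne_zero hp.one_lt).ne'
  obtain ⟨q, r, hqr, hq, hr⟩ : ∃ q r, (p : GaussianInt) = q * r ∧ ¬ IsUnit q ∧ ¬ IsUnit r := by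
    rw [irreducible_iff] at hirr
    push Not at hirr
    exact hirr hunit |>.imp fun q ⟨r, h⟩ => ⟨r, h⟩
  have hnorm : q.norm.natAbs * r.norm.natAbs = p ^ 2 := by
    rw [← natAbs_norm_mul, ← hqr, natAbs_norm_natCast]
  obtain ⟨hqp, hrp⟩ := (hp.mul_eq_prime_sq_iff (mt Zsqrtd.norm_eq_one_iff.1 hq)
    (mt Zsqrtd.norm_eq_one_iff.1 hr)).1 hnorm
  exact ⟨q, r, hqr, Or.inl (prime_of_prime_natAbs_norm (hqp ▸ hp)),
    Or.inl (prime_of_prime_natAbs_norm (hrp ▸ hp))⟩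

theorem exists_associated_pow_of_dvd_pow {R : Type*} [CommRing R] [IsDomain R] {q y : R}
    (hq : Prime q ∨ q = 1) {e : ℕ} (h : y ∣ q ^ e) : ∃ i ≤ e, Associated y (q ^ i) := by
  rcases hq with hq | rfl
  · exact (dvd_prime_pow hq e).1 h
  · refine ⟨0, e.zero_le, ?_⟩
    rw [pow_zero, associated_one_iff_isUnit]
    exact isUnit_of_dvd_one (by simpa using h)

theorem ncard_gaussianNormFiber_prime_pow_le {p : ℕ} (hp : p.Prime) (e : ℕ) :
    (gaussianNormFiber (p ^ e)).ncard ≤ (gaussianNormFiber 1).ncard * (e + 1) ^ 2 := by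
  obtain ⟨q, r, hqr, hq, hr⟩ := exists_natCast_prime_eq_mul hp
  have hsub : gaussianNormFiber (p ^ e) ⊆
      (fun t : GaussianInt × ℕ × ℕ => q ^ t.2.1 * r ^ t.2.2 * t.1) ''
        (gaussianNormFiber 1 ×ˢ Set.Iic e ×ˢ Set.Iic e) := by
    intro x hx
    have hdvd : x ∣ q ^ e * r ^ e := by
      rw [← mul_pow, ← hqr, ← Nat.cast_pow, ← show x.norm.natAbs = p ^ e from hx]
      exact dvd_natAbs_norm x
    obtain ⟨y, w, hy, hw, rfl⟩ := exists_dvd_and_dvd_of_dvd_mul hdvd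
    obtain ⟨i, hi, hyi⟩ := exists_associated_pow_of_dvd_pow hq hy
    obtain ⟨j, hj, hwj⟩ := exists_associated_pow_of_dvd_pow hr hw
    obtain ⟨u, hu⟩ := (hyi.mul_mul hwj).symm
    exact ⟨(u, i, j), ⟨Zsqrtd.norm_eq_one_iff.2 u.isUnit, hi, hj⟩, hu⟩
  have hfin : (gaussianNormFiber 1 ×ˢ Set.Iic e ×ˢ Set.Iic e).Finite :=
    (finite_gaussianNormFiber 1).prod ((Set.finite_Iic e).prod (Set.finite_Iic e))
  calc (gaussianNormFiber (p ^ e)).ncard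
      ≤ (gaussianNormFiber 1 ×ˢ Set.Iic e ×ˢ Set.Iic e).ncard :=
        (Set.ncard_le_ncard hsub (hfin.image _)).trans (Set.ncard_image_le hfin)
    _ = (gaussianNormFiber 1).ncard * (e + 1) ^ 2 := by
        rw [Set.ncard_prod, Set.ncard_prod, ← Finset.coe_Iic, Set.ncard_coe_finset, Nat.card_Iic,
          sq]

theorem exists_ncard_gaussianNormFiber_le {ε : ℝ} (hε : 0 < ε) :
    ∃ C : ℝ, 0 < C ∧
      ∀ n : ℕ, ((gaussianNormFiber n).ncard : ℝ) ≤ C * ((n : ℝ) + 1) ^ ε := by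
  have hone : 1 ≤ (gaussianNormFiber 1).ncard :=
    (Set.ncard_pos (finite_gaussianNormFiber 1)).2 ⟨1, by simp [gaussianNormFiber]⟩
  obtain ⟨C, hC, hn⟩ := exists_le_mul_rpow_of_submultiplicative
    (f := fun n => ((gaussianNormFiber n).ncard : ℝ)) (fun _ => Nat.cast_nonneg _)
    (Nat.one_le_cast.2 hone) (fun a b hab => by exact_mod_cast ncard_gaussianNormFiber_mul_le hab)
    (fun p e hp => by exact_mod_cast ncard_gaussianNormFiber_prime_pow_le hp e) hε
  set C₀ : ℝ := (gaussianNormFiber 0).ncard + (gaussianNormFiber 1).ncard with hC₀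
  refine ⟨C + C₀, by positivity, fun n => ?_⟩
  rcases lt_or_ge 1 n with h | h
  · calc ((gaussianNormFiber n).ncard : ℝ) ≤ C * (n : ℝ) ^ ε := hn n h
      _ ≤ (C + C₀) * ((n : ℝ) + 1) ^ ε := by
        gcongr
        · exact le_add_of_nonneg_right (by positivity)
        · exact le_add_of_nonneg_right zero_le_one
  · have hle : ((gaussianNormFiber n).ncard : ℝ) ≤ C + C₀ := by
      interval_cases n <;> rw [hC₀] <;> linarith [(gaussianNormFiber 0).ncard.cast_nonneg (α := ℝ),
        (gaussianNormFiber 1).ncard.cast_nonneg (α := ℝ)]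
    exact hle.trans (le_mul_of_one_le_right (by positivity)
      (Real.one_le_rpow (le_add_of_nonneg_left n.cast_nonneg) hε.le))

end GaussianIntegers

section Counting

open Finset

theorem card_le_one_add_div {ι : Type*} {T : Finset ι} {f : ι → ℝ} {a b c : ℝ} (hc : 0 < c)
    (hab : a ≤ b) (hsep : (T : Set ι).Pairwise fun i j => c ≤ |f i - f j|)
    (hf : ∀ i ∈ T, f i ∈ Set.Icc a b) : (#T : ℝ) ≤ 1 + (b - a) / c := by
  have hmaps : ∀ i ∈ T, ⌊(f i - a) / c⌋ ∈ Icc 0 ⌊(b - a) / c⌋ := fun i hi => by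
    obtain ⟨hai, hib⟩ := hf i hi
    exact mem_Icc.2 ⟨Int.floor_nonneg.2 (div_nonneg (sub_nonneg.2 hai) hc.le),
      Int.floor_le_floor (by gcongr)⟩
  have hinj : (T : Set ι).InjOn fun i => ⌊(f i - a) / c⌋ := fun i hi j hj hij => by
    by_contra hne
    have h := Int.abs_sub_lt_one_of_floor_eq_floor hij
    rw [← sub_div, sub_sub_sub_cancel_right, abs_div, abs_of_pos hc, div_lt_one hc] at h
    exact h.not_ge (hsep hi hj hne)
  have hcard : (#T : ℤ) ≤ ⌊(b - a) / c⌋ + 1 := by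
    have hfloor : 0 ≤ ⌊(b - a) / c⌋ := Int.floor_nonneg.2 (div_nonneg (sub_nonneg.2 hab) hc.le)
    have h := card_le_card_of_injOn _ hmaps hinj
    rw [Int.card_Icc] at h
    omega
  calc (#T : ℝ) ≤ ⌊(b - a) / c⌋ + 1 := by exact_mod_cast hcard
    _ ≤ 1 + (b - a) / c := by rw [add_comm]; gcongr; exact Int.floor_le _

theorem cast_card_le_mul_card_image {α β : Type*} [DecidableEq β] {s : Finset α} {f : α → β}
    {k : ℝ} (h : ∀ b ∈ s.image f, (#{x ∈ s | f x = b} : ℝ) ≤ k) :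
    (#s : ℝ) ≤ k * #(s.image f) := by
  rw [card_eq_sum_card_image f s, Nat.cast_sum, mul_comm, ← nsmul_eq_mul]
  exact sum_le_card_nsmul _ _ _ h

theorem exists_card_gaussianInt_le {ε : ℝ} (hε : 0 < ε) :
    ∃ C : ℝ, 0 < C ∧ ∀ (β τ M R : ℝ) (W : Finset GaussianInt), 0 < β → 0 ≤ M → 0 ≤ R →
      (∀ w ∈ W, |β * w.norm.natAbs + τ| ≤ M) → (∀ w ∈ W, (w.norm.natAbs : ℝ) ≤ R) →
        (#W : ℝ) ≤ C * (R + 1) ^ ε * (1 + 2 * M / β) := by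
  obtain ⟨C, hC, hfiber⟩ := exists_ncard_gaussianNormFiber_le hε
  refine ⟨C, hC, fun β τ M R W hβ hM hR hτ hWR => ?_⟩
  have hnorms : (#(W.image fun w => w.norm.natAbs) : ℝ) ≤ 1 + 2 * M / β := by
    have h := card_le_one_add_div (T := W.image fun w => w.norm.natAbs) (f := Nat.cast)
      (a := (-τ - M) / β) (b := (-τ + M) / β) one_pos (by gcongr; linarith)
      (fun m _ n _ hmn => ?_) fun n hn => ?_
    · refine h.trans_eq ?_
      ring
    · have hsep : (1 : ℤ) ≤ |(m : ℤ) - n| := Int.one_le_abs (sub_ne_zero.2 (by exact_mod_cast hmn))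
      exact_mod_cast hsep
    · obtain ⟨w, hw, rfl⟩ := mem_image.1 hn
      obtain ⟨hlo, hhi⟩ := abs_le.1 (hτ w hw)
      exact ⟨(div_le_iff₀' hβ).2 (by linarith), (le_div_iff₀' hβ).2 (by linarith)⟩
  have hfib : ∀ n ∈ W.image fun w => w.norm.natAbs,
      (#{w ∈ W | w.norm.natAbs = n} : ℝ) ≤ C * (R + 1) ^ ε := fun n hn => by
    have hsub : (({w ∈ W | w.norm.natAbs = n} : Finset GaussianInt) : Set GaussianInt) ⊆
        gaussianNormFiber n := fun w hw => (mem_filter.1 hw).2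
    have hle := Set.ncard_le_ncard hsub (finite_gaussianNormFiber n)
    rw [Set.ncard_coe_finset] at hle
    obtain ⟨w, hw, rfl⟩ := mem_image.1 hn
    refine (Nat.cast_le.2 hle).trans ((hfiber _).trans ?_)
    gcongr
    exact hWR w hw
  calc (#W : ℝ) ≤ C * (R + 1) ^ ε * #(W.image fun w => w.norm.natAbs) :=
        cast_card_le_mul_card_image hfib
    _ ≤ C * (R + 1) ^ ε * (1 + 2 * M / β) := by gcongr

theorem mul_pow_four_add_one_rpow_le {Q N ε : ℝ} (hQ : 0 ≤ Q) (hN : 1 ≤ N) (hε : 0 ≤ ε) :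
    (Q * N ^ 4 + 1) ^ (ε / 4) ≤ (Q + 1) ^ (ε / 4) * N ^ ε := by
  calc (Q * N ^ 4 + 1) ^ (ε / 4) ≤ ((Q + 1) * N ^ 4) ^ (ε / 4) := by
        gcongr
        linarith [one_le_pow₀ hN (n := 4)]
    _ = (Q + 1) ^ (ε / 4) * N ^ ε := by
        rw [Real.mul_rpow (by positivity) (by positivity), ← Real.rpow_natCast_mul (by positivity)]
        congr 2
        push_cast
        ring

/-- A set of nonnegative reals that is `c`-separated and whose squares stay within `B` of the
multiples `β m²` of integer squares. The positive zeros of `J0` have this form, and nothing else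
about them enters the counting argument. -/
structure IsSeparatedNearSquares (Z : Set ℝ) (c β B : ℝ) : Prop where
  sep_pos : 0 < c
  scale_pos : 0 < β
  error_nonneg : 0 ≤ B
  nonneg : ∀ x ∈ Z, 0 ≤ x
  separated : Z.Pairwise fun x y => c ≤ |x - y|
  near_squares : ∀ x ∈ Z, ∃ m : ℤ, |x ^ 2 - β * (m : ℝ) ^ 2| ≤ B

/-- The pairs `(z_{n₁}, z_{n₂})` of the given dyadic sizes for which some `τ₁` makes both
modulations in `Λ` of size `O(M)`. -/
def resonantPairs (Z : Set ℝ) (τ N₁ N₂ M : ℝ) : Set (ℝ × ℝ) :=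
  {p | p.1 ∈ Z ∧ p.2 ∈ Z ∧ |p.1 ^ 2 + p.2 ^ 2 + τ| ≤ M ∧
    1 + p.1 ∈ Set.Icc N₁ (2 * N₁) ∧ 1 + p.2 ∈ Set.Icc N₂ (2 * N₂)}

variable {Z : Set ℝ} {c β B τ N₁ N₂ M : ℝ} {S : Finset (ℝ × ℝ)}

theorem image_swap_subset_resonantPairs (hS : (S : Set (ℝ × ℝ)) ⊆ resonantPairs Z τ N₁ N₂ M) :
    (S.image Prod.swap : Set (ℝ × ℝ)) ⊆ resonantPairs Z τ N₂ N₁ M := by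
  intro q hq
  obtain ⟨p, hp, rfl⟩ := mem_image.1 hq
  obtain ⟨h₁, h₂, hM, hN₁, hN₂⟩ := hS hp
  exact ⟨h₂, h₁, by rwa [Prod.fst_swap, Prod.snd_swap, add_comm (p.2 ^ 2)], hN₂, hN₁⟩

namespace IsSeparatedNearSquares

theorem mono (hZ : IsSeparatedNearSquares Z c β B) {Y : Set ℝ} (h : Y ⊆ Z) :
    IsSeparatedNearSquares Y c β B where
  __ := hZ
  nonneg x hx := hZ.nonneg x (h hx)
  separated := hZ.separated.mono h
  near_squares x hx := hZ.near_squares x (h hx)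

theorem card_le_of_mem_Icc (hZ : IsSeparatedNearSquares Z c β B) {T : Finset ℝ}
    (hT : (T : Set ℝ) ⊆ Z) {a b : ℝ} (hab : a ≤ b) (h : ∀ x ∈ T, x ∈ Set.Icc a b) :
    (#T : ℝ) ≤ 1 + (b - a) / c :=
  card_le_one_add_div hZ.sep_pos hab (hZ.separated.mono hT) h

theorem sq_separated (hZ : IsSeparatedNearSquares Z c β B) {x y N : ℝ} (hx : x ∈ Z) (hy : y ∈ Z)
    (hxy : x ≠ y) (hNy : N ≤ 1 + y) :
    c ^ 2 / (1 + c) * N ≤ |x ^ 2 - y ^ 2| := by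
  have hc := hZ.sep_pos
  have hgap := hZ.separated hx hy hxy
  have hx0 := hZ.nonneg x hx
  have hy0 := hZ.nonneg y hy
  have hmax : c ≤ x + y := hgap.trans (abs_sub_le_iff.2 ⟨by linarith, by linarith⟩)
  have hsum : c / (1 + c) * N ≤ x + y := by
    rw [div_mul_eq_mul_div, div_le_iff₀ (by positivity)]
    nlinarith
  calc c ^ 2 / (1 + c) * N = c * (c / (1 + c) * N) := by ring
    _ ≤ c * (x + y) := by gcongr
    _ ≤ |x - y| * (x + y) := by gcongr
    _ = |x ^ 2 - y ^ 2| := by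
      rw [← abs_of_nonneg (add_nonneg hx0 hy0), ← abs_mul]
      ring_nf

theorem card_le_of_sq_mem_Icc (hZ : IsSeparatedNearSquares Z c β B) {T : Finset ℝ}
    (hT : (T : Set ℝ) ⊆ Z) {a b N : ℝ} (hab : a ≤ b) (hN : 0 < N) (hNT : ∀ x ∈ T, N ≤ 1 + x)
    (h : ∀ x ∈ T, x ^ 2 ∈ Set.Icc a b) :
    (#T : ℝ) ≤ 1 + (1 + c) / c ^ 2 * (b - a) / N := by
  have hc := hZ.sep_pos
  have hle := card_le_one_add_div (f := fun x : ℝ => x ^ 2) (c := c ^ 2 / (1 + c) * N)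
    (by positivity) hab (fun x hx y hy hxy =>
      hZ.sq_separated (hT hx) (hT hy) hxy (hNT y hy)) h
  refine hle.trans_eq ?_
  field_simp

theorem card_le_card_image_fst_mul (hZ : IsSeparatedNearSquares Z c β B) (hN₂ : 0 < N₂)
    (hM : 0 ≤ M) (hS : (S : Set (ℝ × ℝ)) ⊆ resonantPairs Z τ N₁ N₂ M) :
    (#S : ℝ) ≤ (1 + (1 + c) / c ^ 2 * (2 * M) / N₂) * #(S.image Prod.fst) := by
  refine cast_card_le_mul_card_image fun x _ => ?_
  have hinj : Set.InjOn Prod.snd (({p ∈ S | p.1 = x} : Finset (ℝ × ℝ)) : Set (ℝ × ℝ)) :=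
    fun p hp q hq hpq => Prod.ext ((mem_filter.1 hp).2.trans (mem_filter.1 hq).2.symm) hpq
  have hmem : ∀ y ∈ ({p ∈ S | p.1 = x} : Finset (ℝ × ℝ)).image Prod.snd,
      (x, y) ∈ resonantPairs Z τ N₁ N₂ M := fun y hy => by
    obtain ⟨⟨p₁, p₂⟩, hp, rfl⟩ := mem_image.1 hy
    obtain ⟨hpS, rfl⟩ := mem_filter.1 hp
    exact hS hpS
  rw [← card_image_of_injOn hinj]
  have hle := hZ.card_le_of_sq_mem_Icc (a := -τ - x ^ 2 - M) (b := -τ - x ^ 2 + M)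
    (fun y hy => (hmem y hy).2.1) (by linarith) hN₂ (fun y hy => (hmem y hy).2.2.2.2.1)
    fun y hy => by
      obtain ⟨hlo, hhi⟩ := abs_le.1 (hmem y hy).2.2.1
      dsimp only at hlo hhi
      exact ⟨by linarith, by linarith⟩
  refine hle.trans_eq ?_
  ring

theorem card_le_card_image_snd_mul (hZ : IsSeparatedNearSquares Z c β B) (hN₁ : 0 < N₁)
    (hM : 0 ≤ M) (hS : (S : Set (ℝ × ℝ)) ⊆ resonantPairs Z τ N₁ N₂ M) :
    (#S : ℝ) ≤ (1 + (1 + c) / c ^ 2 * (2 * M) / N₁) * #(S.image Prod.snd) := by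
  have h := hZ.card_le_card_image_fst_mul hN₁ hM (image_swap_subset_resonantPairs hS)
  rwa [card_image_of_injective S Prod.swap_injective, image_image] at h

theorem card_image_fst_le (hZ : IsSeparatedNearSquares Z c β B) (hN₁ : 0 ≤ N₁)
    (hS : (S : Set (ℝ × ℝ)) ⊆ resonantPairs Z τ N₁ N₂ M) :
    (#(S.image Prod.fst) : ℝ) ≤ 1 + 2 * N₁ / c := by
  have hle := hZ.card_le_of_mem_Icc (T := S.image Prod.fst) (a := 0) (b := 2 * N₁)
    (fun x hx => ?_) (by positivity) fun x hx => ?_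
  · rwa [sub_zero] at hle
  · obtain ⟨p, hp, rfl⟩ := mem_image.1 hx
    exact (hS hp).1
  · obtain ⟨p, hp, rfl⟩ := mem_image.1 hx
    obtain ⟨h₁, -, -, ⟨-, hN⟩, -⟩ := hS hp
    exact ⟨hZ.nonneg _ h₁, by linarith⟩

theorem card_image_snd_le (hZ : IsSeparatedNearSquares Z c β B) (hN₂ : 0 < N₂)
    (hN : N₁ ^ 2 ≤ N₂) (hM : M ≤ N₂) (hS : (S : Set (ℝ × ℝ)) ⊆ resonantPairs Z τ N₁ N₂ M) :
    (#(S.image Prod.snd) : ℝ) ≤ 1 + (1 + c) / c ^ 2 * 10 := by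
  have hle := hZ.card_le_of_sq_mem_Icc (T := S.image Prod.snd) (a := -τ - 5 * N₂)
    (b := -τ + 5 * N₂) (fun y hy => ?_) (by linarith) hN₂ (fun y hy => ?_) fun y hy => ?_
  · refine hle.trans_eq ?_
    field_simp
    ring
  · obtain ⟨p, hp, rfl⟩ := mem_image.1 hy
    exact (hS hp).2.1
  · obtain ⟨p, hp, rfl⟩ := mem_image.1 hy
    exact (hS hp).2.2.2.2.1
  · obtain ⟨p, hp, rfl⟩ := mem_image.1 hy
    obtain ⟨h₁, -, hτ, ⟨-, hN₁⟩, -⟩ := hS hp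
    obtain ⟨hlo, hhi⟩ := abs_le.1 hτ
    have hsq : p.1 ^ 2 ≤ (2 * N₁) ^ 2 := pow_le_pow_left₀ (hZ.nonneg _ h₁) (by linarith) 2
    constructor <;> nlinarith [sq_nonneg p.1]

theorem exists_card_le_of_le_modulation (hZ : IsSeparatedNearSquares Z c β B) :
    ∃ C : ℝ, 0 < C ∧ ∀ (τ N₁ N₂ M : ℝ) (S : Finset (ℝ × ℝ)), 1 ≤ N₁ → N₁ ≤ N₂ → N₁ ≤ M →
      (S : Set (ℝ × ℝ)) ⊆ resonantPairs Z τ N₁ N₂ M → (#S : ℝ) ≤ C * M := by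
  have hc := hZ.sep_pos
  set K : ℝ := (1 + c) / c ^ 2 with hK
  have hK0 : 0 < K := by positivity
  refine ⟨(1 + 2 * K) * (1 + 2 / c), by positivity, fun τ N₁ N₂ M S hN₁ hN hM hS => ?_⟩
  have hN₁0 : 0 < N₁ := by linarith
  have hM0 : 0 < M := by linarith
  calc (#S : ℝ) ≤ (1 + K * (2 * M) / N₂) * #(S.image Prod.fst) :=
        hZ.card_le_card_image_fst_mul (by linarith) hM0.le hS
    _ ≤ (1 + K * (2 * M) / N₁) * (N₁ + 2 * N₁ / c) := by
        gcongr
        exact (hZ.card_image_fst_le hN₁0.le hS).trans (by gcongr)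
    _ = (N₁ + 2 * K * M) * (1 + 2 / c) := by field_simp
    _ ≤ (M + 2 * K * M) * (1 + 2 / c) := by gcongr
    _ = (1 + 2 * K) * (1 + 2 / c) * M := by ring

theorem exists_card_le_of_sq_le (hZ : IsSeparatedNearSquares Z c β B) :
    ∃ C : ℝ, 0 < C ∧ ∀ (τ N₁ N₂ M : ℝ) (S : Finset (ℝ × ℝ)), 1 ≤ N₁ → N₁ ^ 2 ≤ N₂ → 1 ≤ M →
      M ≤ N₁ → (S : Set (ℝ × ℝ)) ⊆ resonantPairs Z τ N₁ N₂ M → (#S : ℝ) ≤ C * M := by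
  have hc := hZ.sep_pos
  set K : ℝ := (1 + c) / c ^ 2 with hK
  have hK0 : 0 < K := by positivity
  refine ⟨(1 + 2 * K) * (1 + K * 10), by positivity, fun τ N₁ N₂ M S hN₁ hN hM hMN hS => ?_⟩
  have hMN₂ : M ≤ N₂ := by nlinarith
  calc (#S : ℝ) ≤ (1 + K * (2 * M) / N₁) * #(S.image Prod.snd) :=
        hZ.card_le_card_image_snd_mul (by linarith) (by linarith) hS
    _ ≤ (M + K * (2 * M)) * (1 + K * 10) := by
        gcongr
        · exact div_le_self (by positivity) hN₁
        · exact hZ.card_image_snd_le (by linarith) hN hMN₂ hS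
    _ = (1 + 2 * K) * (1 + K * 10) * M := by ring

theorem card_filter_gaussianInt_le (hZ : IsSeparatedNearSquares Z c β B) {m : ℝ → ℤ}
    (hm : ∀ x ∈ Z, |x ^ 2 - β * (m x : ℝ) ^ 2| ≤ B) (hS : (S : Set (ℝ × ℝ)) ⊆ Z ×ˢ Z)
    (w : GaussianInt) :
    (#{p ∈ S | (⟨m p.1, m p.2⟩ : GaussianInt) = w} : ℝ) ≤
      (1 + (1 + c) / c ^ 2 * (2 * B)) ^ 2 := by
  set U : Finset (ℝ × ℝ) := {p ∈ S | (⟨m p.1, m p.2⟩ : GaussianInt) = w} with hU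
  have hc := hZ.sep_pos
  have hB := hZ.error_nonneg
  have hcard (T : Finset ℝ) (k : ℤ) (hT : ∀ x ∈ T, x ∈ Z ∧ m x = k) :
      (#T : ℝ) ≤ 1 + (1 + c) / c ^ 2 * (2 * B) := by
    refine (hZ.card_le_of_sq_mem_Icc (fun x hx => (hT x hx).1) (a := β * k ^ 2 - B)
      (b := β * k ^ 2 + B) (by linarith) one_pos
      (fun x hx => le_add_of_nonneg_right (hZ.nonneg x (hT x hx).1)) fun x hx => ?_).trans_eq ?_
    · obtain ⟨hxZ, rfl⟩ := hT x hx
      obtain ⟨hlo, hhi⟩ := abs_le.1 (hm x hxZ)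
      exact ⟨by linarith, by linarith⟩
    · ring
  have hfst : (#(U.image Prod.fst) : ℝ) ≤ 1 + (1 + c) / c ^ 2 * (2 * B) := by
    refine hcard _ w.re fun x hx => ?_
    obtain ⟨p, hp, rfl⟩ := mem_image.1 hx
    obtain ⟨hpS, rfl⟩ := mem_filter.1 hp
    exact ⟨(hS hpS).1, rfl⟩
  have hsnd : (#(U.image Prod.snd) : ℝ) ≤ 1 + (1 + c) / c ^ 2 * (2 * B) := by
    refine hcard _ w.im fun x hx => ?_
    obtain ⟨p, hp, rfl⟩ := mem_image.1 hx
    obtain ⟨hpS, rfl⟩ := mem_filter.1 hp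
    exact ⟨(hS hpS).2, rfl⟩
  calc (#U : ℝ) ≤ #(U.image Prod.fst) * #(U.image Prod.snd) := by
        exact_mod_cast (card_le_card subset_product).trans_eq (card_product _ _)
    _ ≤ (1 + (1 + c) / c ^ 2 * (2 * B)) ^ 2 := by rw [sq]; gcongr

theorem natAbs_norm_bounds (hZ : IsSeparatedNearSquares Z c β B) {m : ℝ → ℤ}
    (hm : ∀ x ∈ Z, |x ^ 2 - β * (m x : ℝ) ^ 2| ≤ B) (hN₁ : 1 ≤ N₁) (hN : N₁ ≤ N₂)
    (hNsq : N₂ ≤ N₁ ^ 2) {p : ℝ × ℝ} (hp : p ∈ resonantPairs Z τ N₁ N₂ M) :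
    |β * (⟨m p.1, m p.2⟩ : GaussianInt).norm.natAbs + τ| ≤ M + 2 * B ∧
      ((⟨m p.1, m p.2⟩ : GaussianInt).norm.natAbs : ℝ) ≤ (8 + 2 * B) / β * N₁ ^ 4 := by
  have hβ := hZ.scale_pos
  have hB := hZ.error_nonneg
  obtain ⟨h₁, h₂, hτ, ⟨-, hp₁⟩, ⟨-, hp₂⟩⟩ := hp
  obtain ⟨hlo₁, hhi₁⟩ := abs_le.1 (hm _ h₁)
  obtain ⟨hlo₂, hhi₂⟩ := abs_le.1 (hm _ h₂)
  obtain ⟨hlo, hhi⟩ := abs_le.1 hτ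
  have hnorm : ((⟨m p.1, m p.2⟩ : GaussianInt).norm.natAbs : ℝ) =
      (m p.1 : ℝ) ^ 2 + (m p.2 : ℝ) ^ 2 := by
    rw [← Int.cast_natCast, natAbs_norm_eq_sq_add_sq]
    push_cast
    rfl
  rw [hnorm]
  refine ⟨abs_le.2 ⟨by linarith, by linarith⟩, ?_⟩
  have hsq₁ : p.1 ^ 2 ≤ (2 * N₂) ^ 2 := pow_le_pow_left₀ (hZ.nonneg _ h₁) (by linarith) 2
  have hsq₂ : p.2 ^ 2 ≤ (2 * N₂) ^ 2 := pow_le_pow_left₀ (hZ.nonneg _ h₂) (by linarith) 2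
  have hN₂sq : N₂ ^ 2 ≤ N₁ ^ 4 :=
    (pow_le_pow_left₀ (by linarith) hNsq 2).trans_eq (by rw [← pow_mul])
  have hN₁pow : 1 ≤ N₁ ^ 4 := one_le_pow₀ hN₁
  rw [div_mul_eq_mul_div, le_div_iff₀' hβ]
  nlinarith

theorem exists_card_le_of_le_sq (hZ : IsSeparatedNearSquares Z c β B) {ε : ℝ} (hε : 0 < ε) :
    ∃ C : ℝ, 0 < C ∧ ∀ (τ N₁ N₂ M : ℝ) (S : Finset (ℝ × ℝ)), 1 ≤ N₁ → N₁ ≤ N₂ → N₂ ≤ N₁ ^ 2 →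
      1 ≤ M → (S : Set (ℝ × ℝ)) ⊆ resonantPairs Z τ N₁ N₂ M → (#S : ℝ) ≤ C * N₁ ^ ε * M := by
  have hc := hZ.sep_pos
  have hβ := hZ.scale_pos
  have hB := hZ.error_nonneg
  obtain ⟨C, hC, hW⟩ := exists_card_gaussianInt_le (ε := ε / 4) (by positivity)
  choose! m hm using hZ.near_squares
  set D : ℝ := (1 + (1 + c) / c ^ 2 * (2 * B)) ^ 2
  set Q : ℝ := (8 + 2 * B) / β
  refine ⟨D * (C * (Q + 1) ^ (ε / 4) * (1 + 2 * (1 + 2 * B) / β)), by positivity,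
    fun τ N₁ N₂ M S hN₁ hN hNsq hM hS => ?_⟩
  set g : ℝ × ℝ → GaussianInt := fun p => ⟨m p.1, m p.2⟩
  have hfiber : ∀ w ∈ S.image g, (#{p ∈ S | g p = w} : ℝ) ≤ D := fun w _ =>
    hZ.card_filter_gaussianInt_le hm (fun p hp => ⟨(hS hp).1, (hS hp).2.1⟩) w
  have himage : (#(S.image g) : ℝ) ≤
      C * (Q * N₁ ^ 4 + 1) ^ (ε / 4) * (1 + 2 * (M + 2 * B) / β) := by
    refine hW β τ _ _ _ hβ (by positivity) (by positivity) (fun w hw => ?_) fun w hw => ?_ <;>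
      obtain ⟨p, hp, rfl⟩ := mem_image.1 hw <;>
      have h := hZ.natAbs_norm_bounds hm hN₁ hN hNsq (hS hp)
    exacts [h.1, h.2]
  have hlin : 1 + 2 * (M + 2 * B) / β ≤ (1 + 2 * (1 + 2 * B) / β) * M := by
    have hBM : M + 2 * B ≤ (1 + 2 * B) * M := by nlinarith
    calc 1 + 2 * (M + 2 * B) / β ≤ M + 2 * ((1 + 2 * B) * M) / β := by gcongr
      _ = (1 + 2 * (1 + 2 * B) / β) * M := by ring
  calc (#S : ℝ) ≤ D * #(S.image g) := cast_card_le_mul_card_image hfiber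
    _ ≤ D * (C * ((Q + 1) ^ (ε / 4) * N₁ ^ ε) * ((1 + 2 * (1 + 2 * B) / β) * M)) := by
        gcongr
        exact himage.trans (by gcongr; exact mul_pow_four_add_one_rpow_le (by positivity) hN₁ hε.le)
    _ = D * (C * (Q + 1) ^ (ε / 4) * (1 + 2 * (1 + 2 * B) / β)) * N₁ ^ ε * M := by ring

theorem exists_card_le_of_le (hZ : IsSeparatedNearSquares Z c β B) {ε : ℝ} (hε : 0 < ε) :
    ∃ C : ℝ, 0 < C ∧ ∀ (τ N₁ N₂ M : ℝ) (S : Finset (ℝ × ℝ)), 1 ≤ N₁ → N₁ ≤ N₂ → 1 ≤ M →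
      (S : Set (ℝ × ℝ)) ⊆ resonantPairs Z τ N₁ N₂ M → (#S : ℝ) ≤ C * N₁ ^ ε * M := by
  obtain ⟨C₁, hC₁, h₁⟩ := hZ.exists_card_le_of_le_modulation
  obtain ⟨C₂, hC₂, h₂⟩ := hZ.exists_card_le_of_sq_le
  obtain ⟨C₃, hC₃, h₃⟩ := hZ.exists_card_le_of_le_sq hε
  refine ⟨C₁ + C₂ + C₃, by positivity, fun τ N₁ N₂ M S hN₁ hN hM hS => ?_⟩
  have hpow : 1 ≤ N₁ ^ ε := Real.one_le_rpow hN₁ hε.le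
  have habsorb {C : ℝ} (hC : 0 ≤ C) (hle : C ≤ C₁ + C₂ + C₃) (h : (#S : ℝ) ≤ C * M) :
      (#S : ℝ) ≤ (C₁ + C₂ + C₃) * N₁ ^ ε * M :=
    h.trans (by gcongr; exact hle.trans (le_mul_of_one_le_right (hC.trans hle) hpow))
  rcases le_total N₂ (N₁ ^ 2) with hNsq | hNsq
  · exact (h₃ τ N₁ N₂ M S hN₁ hN hNsq hM hS).trans (by gcongr; linarith)
  rcases le_total N₁ M with hNM | hNM
  · exact habsorb hC₁.le (by linarith) (h₁ τ N₁ N₂ M S hN₁ hN hNM hS)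
  · exact habsorb hC₂.le (by linarith) (h₂ τ N₁ N₂ M S hN₁ hNsq hM hNM hS)

theorem exists_card_le (hZ : IsSeparatedNearSquares Z c β B) {ε : ℝ} (hε : 0 < ε) :
    ∃ C : ℝ, 0 < C ∧ ∀ (τ N₁ N₂ M : ℝ) (S : Finset (ℝ × ℝ)), 1 ≤ N₁ → 1 ≤ N₂ → 1 ≤ M →
      (S : Set (ℝ × ℝ)) ⊆ resonantPairs Z τ N₁ N₂ M → (#S : ℝ) ≤ C * min N₁ N₂ ^ ε * M := by
  obtain ⟨C, hC, h⟩ := hZ.exists_card_le_of_le hε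
  refine ⟨C, hC, fun τ N₁ N₂ M S hN₁ hN₂ hM hS => ?_⟩
  rcases le_total N₁ N₂ with hN | hN
  · rw [min_eq_left hN]
    exact h τ N₁ N₂ M S hN₁ hN hM hS
  · rw [min_eq_right hN, ← card_image_of_injective S Prod.swap_injective]
    exact h τ N₂ N₁ M _ hN₂ hN hM (image_swap_subset_resonantPairs hS)

theorem exists_ncard_resonantPairs_le (hZ : IsSeparatedNearSquares Z c β B) {ε : ℝ} (hε : 0 < ε) :
    ∃ C : ℝ, 0 < C ∧ ∀ τ N₁ N₂ M : ℝ, 1 ≤ N₁ → 1 ≤ N₂ → 1 ≤ M →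
      (resonantPairs Z τ N₁ N₂ M).Finite ∧
        ((resonantPairs Z τ N₁ N₂ M).ncard : ℝ) ≤ C * min N₁ N₂ ^ ε * M := by
  obtain ⟨C, hC, h⟩ := hZ.exists_card_le hε
  refine ⟨C, hC, fun τ N₁ N₂ M hN₁ hN₂ hM => ?_⟩
  have hfin : (resonantPairs Z τ N₁ N₂ M).Finite := by
    by_contra hinf
    obtain ⟨k, hk⟩ := exists_nat_gt (C * min N₁ N₂ ^ ε * M)
    obtain ⟨S, hS, rfl⟩ := Set.Infinite.exists_subset_card_eq hinf k
    exact hk.not_ge (h τ N₁ N₂ M S hN₁ hN₂ hM hS)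
  refine ⟨hfin, ?_⟩
  rw [Set.ncard_eq_toFinset_card _ hfin]
  exact h τ N₁ N₂ M _ hN₁ hN₂ hM hfin.coe_toFinset.subset

end IsSeparatedNearSquares

end Counting

section Measure

open Set

theorem prod_apply_le_ncard_mul {α κ : Type*} [MeasurableSpace α] [MeasurableSpace κ]
    {μ : Measure α} {ν : Measure κ} [SFinite ν] {Λ : Set (α × κ)} {I : κ → Set α} {P : Set κ}
    {ℓ : ENNReal} (hP : P.Finite) (hν : ∀ k, ν {k} ≤ 1) (hI : ∀ k, μ (I k) ≤ ℓ)
    (hΛ : ∀ p ∈ Λ, p.2 ∈ P ∧ p.1 ∈ I p.2) : μ.prod ν Λ ≤ P.ncard * ℓ := by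
  calc μ.prod ν Λ ≤ μ.prod ν (⋃ k ∈ hP.toFinset, I k ×ˢ {k}) := by
        refine measure_mono fun p hp => ?_
        obtain ⟨hpP, hpI⟩ := hΛ p hp
        exact mem_biUnion (hP.mem_toFinset.2 hpP) ⟨hpI, rfl⟩
    _ ≤ ∑ k ∈ hP.toFinset, μ.prod ν (I k ×ˢ {k}) := measure_biUnion_finset_le _ _
    _ ≤ ∑ _k ∈ hP.toFinset, ℓ := by
        refine Finset.sum_le_sum fun k _ => ?_
        rw [Measure.prod_prod]
        exact (mul_le_mul' (hI k) (hν k)).trans_eq (mul_one ℓ)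
    _ = P.ncard * ℓ := by
        rw [Finset.sum_const, nsmul_eq_mul, ncard_eq_toFinset_card P hP]

theorem count_prod_count_singleton {ι : Type*} [Countable ι] [MeasurableSpace ι]
    [MeasurableSingletonClass ι] (k : ι × ι) :
    (Measure.count.prod Measure.count : Measure (ι × ι)) {k} = 1 := by
  rw [← Prod.mk.eta (p := k), ← singleton_prod_singleton, Measure.prod_prod,
    Measure.count_singleton, Measure.count_singleton, one_mul]

theorem volume_modulations_le (a b τ L₁ L₂ : ℝ) :
    volume {t : ℝ | |t + a| ≤ 2 * L₁ ∧ |τ - t + b| ≤ 2 * L₂} ≤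
      ENNReal.ofReal (4 * min L₁ L₂) := by
  rcases le_total L₁ L₂ with h | h
  · calc volume {t : ℝ | |t + a| ≤ 2 * L₁ ∧ |τ - t + b| ≤ 2 * L₂}
        ≤ volume (Metric.closedBall (-a) (2 * L₁)) := measure_mono fun t ht => by
          simpa [Real.dist_eq] using ht.1
      _ = ENNReal.ofReal (4 * min L₁ L₂) := by
          rw [Real.volume_closedBall, min_eq_left h]
          ring_nf
  · calc volume {t : ℝ | |t + a| ≤ 2 * L₁ ∧ |τ - t + b| ≤ 2 * L₂}
        ≤ volume (Metric.closedBall (τ + b) (2 * L₂)) := measure_mono fun t ht => by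
          rw [Metric.mem_closedBall', Real.dist_eq, add_sub_right_comm]
          exact ht.2
      _ = ENNReal.ofReal (4 * min L₁ L₂) := by
          rw [Real.volume_closedBall, min_eq_right h]
          ring_nf

theorem mem_resonantPairs_of_modulations {Z : Set ℝ} {t τ L₁ L₂ N₁ N₂ : ℝ} {p : ℝ × ℝ}
    (h₁ : p.1 ∈ Z) (h₂ : p.2 ∈ Z) (hL₁ : |t + p.1 ^ 2| ≤ 2 * L₁) (hL₂ : |τ - t + p.2 ^ 2| ≤ 2 * L₂)
    (hN₁ : 1 + p.1 ∈ Icc N₁ (2 * N₁)) (hN₂ : 1 + p.2 ∈ Icc N₂ (2 * N₂)) :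
    p ∈ resonantPairs Z τ N₁ N₂ (4 * max L₁ L₂) := by
  refine ⟨h₁, h₂, ?_, hN₁, hN₂⟩
  calc |p.1 ^ 2 + p.2 ^ 2 + τ| = |(t + p.1 ^ 2) + (τ - t + p.2 ^ 2)| := by ring_nf
    _ ≤ 2 * L₁ + 2 * L₂ := (abs_add_le _ _).trans (add_le_add hL₁ hL₂)
    _ ≤ 4 * max L₁ L₂ := by linarith [le_max_left L₁ L₂, le_max_right L₁ L₂]

theorem exists_ncard_index_pairs_le {ι : Type*} {z : ι → ℝ} {A : Set ι} {c β B ε : ℝ}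
    (hinj : InjOn z A) (hz : IsSeparatedNearSquares (z '' A) c β B) (hε : 0 < ε) :
    ∃ C : ℝ, 0 < C ∧ ∀ τ N₁ N₂ M : ℝ, 1 ≤ N₁ → 1 ≤ N₂ → 1 ≤ M →
      (A ×ˢ A ∩ Prod.map z z ⁻¹' resonantPairs (z '' A) τ N₁ N₂ M).Finite ∧
        ((A ×ˢ A ∩ Prod.map z z ⁻¹' resonantPairs (z '' A) τ N₁ N₂ M).ncard : ℝ) ≤
          C * min N₁ N₂ ^ ε * M := by
  obtain ⟨C, hC, h⟩ := hz.exists_ncard_resonantPairs_le hε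
  refine ⟨C, hC, fun τ N₁ N₂ M hN₁ hN₂ hM => ?_⟩
  obtain ⟨hfin, hcard⟩ := h τ N₁ N₂ M hN₁ hN₂ hM
  have hmaps : ∀ k ∈ A ×ˢ A ∩ Prod.map z z ⁻¹' resonantPairs (z '' A) τ N₁ N₂ M,
      Prod.map z z k ∈ resonantPairs (z '' A) τ N₁ N₂ M := fun k hk => hk.2
  have hinjOn := (hinj.prodMap hinj).mono
    (inter_subset_left (t := Prod.map z z ⁻¹' resonantPairs (z '' A) τ N₁ N₂ M))
  exact ⟨Finite.of_injOn hmaps hinjOn hfin,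
    (Nat.cast_le.2 (ncard_le_ncard_of_injOn _ hmaps hinjOn hfin)).trans hcard⟩

end Measure

theorem exists_isSeparatedNearSquares_J0_zeros :
    ∃ c β B : ℝ, IsSeparatedNearSquares {x | 0 < x ∧ J0 x = 0} c β B := by
  obtain ⟨c, hc, hsep⟩ := exists_pairwise_le_abs_sub_J0_zeros
  exact ⟨c, Real.pi ^ 2 / 16, Real.pi + (Real.pi / 2) ^ 2,
    { sep_pos := hc
      scale_pos := by positivity
      error_nonneg := by positivity
      nonneg := fun _ hx => hx.1.le
      separated := hsep
      near_squares := fun _ hx => exists_int_abs_sq_sub_le_of_J0_eq_zero hx.1 hx.2 }⟩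

end BesselZeros

open BesselZeros in
theorem combinatorial_measure_bound_general {ι : Type*} [Countable ι] [MeasurableSpace ι]
    [MeasurableSingletonClass ι] (z : ι → ℝ) (A : Set ι) (hinj : Set.InjOn z A) {c β B : ℝ}
    (hz : IsSeparatedNearSquares (z '' A) c β B) :
    ∀ ε : ℝ, 0 < ε → ∃ C : ℝ, 0 < C ∧
      ∀ τ N₁ N₂ L₁ L₂ : ℝ, 1 ≤ N₁ → 1 ≤ N₂ → 1 ≤ L₁ → 1 ≤ L₂ →
        (volume.prod (Measure.count.prod Measure.count))
          {p : ℝ × ι × ι | p.2.1 ∈ A ∧ p.2.2 ∈ A ∧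
            L₁ ≤ 1 + |p.1 + (z p.2.1) ^ 2| ∧ 1 + |p.1 + (z p.2.1) ^ 2| ≤ 2 * L₁ ∧
            L₂ ≤ 1 + |τ - p.1 + (z p.2.2) ^ 2| ∧ 1 + |τ - p.1 + (z p.2.2) ^ 2| ≤ 2 * L₂ ∧
            N₁ ≤ 1 + z p.2.1 ∧ 1 + z p.2.1 ≤ 2 * N₁ ∧
            N₂ ≤ 1 + z p.2.2 ∧ 1 + z p.2.2 ≤ 2 * N₂} ≤
          ENNReal.ofReal (C * (min N₁ N₂) ^ ε * (L₁ * L₂)) := by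
  intro ε hε
  obtain ⟨C, hC, hpairs⟩ := exists_ncard_index_pairs_le hinj hz hε
  refine ⟨16 * C, by positivity, fun τ N₁ N₂ L₁ L₂ hN₁ hN₂ hL₁ hL₂ => ?_⟩
  obtain ⟨hfin, hcard⟩ := hpairs τ N₁ N₂ (4 * max L₁ L₂) hN₁ hN₂
    (by linarith [le_max_left L₁ L₂])
  refine (prod_apply_le_ncard_mul hfin (fun k => (count_prod_count_singleton k).le)
    (fun k => volume_modulations_le (z k.1 ^ 2) (z k.2 ^ 2) τ L₁ L₂) ?_).trans ?_
  · rintro ⟨t, n₁, n₂⟩ ⟨h₁, h₂, -, hL₁, -, hL₂, hN₁, hN₁', hN₂, hN₂'⟩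
    have hL₁' := (le_add_of_nonneg_left zero_le_one).trans hL₁
    have hL₂' := (le_add_of_nonneg_left zero_le_one).trans hL₂
    exact ⟨⟨⟨h₁, h₂⟩, mem_resonantPairs_of_modulations ⟨n₁, h₁, rfl⟩ ⟨n₂, h₂, rfl⟩ hL₁' hL₂'
      ⟨hN₁, hN₁'⟩ ⟨hN₂, hN₂'⟩⟩, hL₁', hL₂'⟩
  rw [← ENNReal.ofReal_natCast, ← ENNReal.ofReal_mul (Nat.cast_nonneg _)]
  refine ENNReal.ofReal_le_ofReal ?_
  have hmin : 0 ≤ min L₁ L₂ := le_min (by linarith) (by linarith)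
  calc _ ≤ C * min N₁ N₂ ^ ε * (4 * max L₁ L₂) * (4 * min L₁ L₂) := by gcongr
    _ = 16 * C * min N₁ N₂ ^ ε * (max L₁ L₂ * min L₁ L₂) := by ring
    _ = 16 * C * min N₁ N₂ ^ ε * (L₁ * L₂) := by rw [max_mul_min]

/-- Main combinatorial lemma: the measure (Lebesgue in `τ₁`, counting in `(n₁, n₂)`)
of the set `Λ(τ, L₁, L₂, N₁, N₂)` is at most `C_ε (min(N₁,N₂))^ε L₁ L₂`. -/
theorem combinatorial_measure_bound
    (z : ℕ → ℝ)
    (hzpos : ∀ n, 1 ≤ n → 0 < z n)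
    (hzmono : ∀ m n, 1 ≤ m → m < n → z m < z n)
    (hzzero : ∀ n, 1 ≤ n → J0 (z n) = 0)
    (hzall : ∀ x : ℝ, 0 < x → J0 x = 0 → ∃ n, 1 ≤ n ∧ z n = x) :
    ∀ ε : ℝ, 0 < ε → ∃ C : ℝ, 0 < C ∧
      ∀ τ N₁ N₂ L₁ L₂ : ℝ, 1 ≤ N₁ → 1 ≤ N₂ → 1 ≤ L₁ → 1 ≤ L₂ →
        (volume.prod (Measure.count.prod Measure.count))
          {p : ℝ × ℕ × ℕ | 1 ≤ p.2.1 ∧ 1 ≤ p.2.2 ∧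
            L₁ ≤ 1 + |p.1 + (z p.2.1) ^ 2| ∧ 1 + |p.1 + (z p.2.1) ^ 2| ≤ 2 * L₁ ∧
            L₂ ≤ 1 + |τ - p.1 + (z p.2.2) ^ 2| ∧ 1 + |τ - p.1 + (z p.2.2) ^ 2| ≤ 2 * L₂ ∧
            N₁ ≤ 1 + z p.2.1 ∧ 1 + z p.2.1 ≤ 2 * N₁ ∧
            N₂ ≤ 1 + z p.2.2 ∧ 1 + z p.2.2 ≤ 2 * N₂} ≤
          ENNReal.ofReal (C * (min N₁ N₂) ^ ε * (L₁ * L₂)) := by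
  obtain ⟨c, β, B, hJ0⟩ := BesselZeros.exists_isSeparatedNearSquares_J0_zeros
  exact combinatorial_measure_bound_general z (Set.Ici 1)
    (StrictMonoOn.injOn fun m hm n _ hmn => hzmono m n hm hmn)
    (hJ0.mono (Set.image_subset_iff.2 fun n hn => ⟨hzpos n hn, hzzero n hn⟩))
end
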